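/- arXiv:1209.3948 — 5 statements merged into one kernel-verified Lean document; each statement's English description precedes it below -/
import Mathlib

section
/- Let H be a complex Hilbert space, n ≥ 1, and let B₁,…,Bₙ be bounded self-adjoint operators on H that pairwise commute, and let C₁,…,Cₙ be bounded self-adjoint operators on H that pairwise commute. Then for every s = (s₁,…,sₙ) ∈ ℝⁿ, ‖exp(i(s₁B₁ + ⋯ + sₙBₙ)) − exp(i(s₁C₁ + ⋯ + sₙCₙ))‖ ≤ ∑_{j=1}^{n} |sⱼ| ‖Bⱼ − Cⱼ‖, where exp is the exponential of a bounded operator and the norms are operator norms. -/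
/-!
Along the path `t ↦ exp (t • x) * exp ((1 - t) • y)` from `exp y` to `exp x`, the derivative is
`x - y` multiplied on the left and on the right by exponentials. These are unitary when `x` and `y`
are skew-adjoint, so the derivative has constant norm `‖x - y‖`, and the mean value inequality gives
`‖exp x - exp y‖ ≤ ‖x - y‖`.
-/

open NormedSpace

theorem hasDerivAt_exp_smul_mul_exp_one_sub_smul {𝕂 A : Type*} [RCLike 𝕂] [NormedRing A]
    [NormedAlgebra 𝕂 A] [CompleteSpace A] (x y : A) (t : 𝕂) :
    HasDerivAt (fun u : 𝕂 ↦ exp (u • x) * exp ((1 - u) • y))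
      (exp (t • x) * (x - y) * exp ((1 - t) • y)) t := by
  have deriv_right :
      HasDerivAt (fun u : 𝕂 ↦ exp ((1 - u) • y)) (-(y * exp ((1 - t) • y))) t :=
    (hasDerivAt_exp_smul_const' y (1 - t)).comp_const_sub 1 t
  refine ((hasDerivAt_exp_smul_const x t).mul deriv_right).congr_deriv ?_
  noncomm_ring

theorem norm_exp_sub_exp_le_of_mem_skewAdjoint {A : Type*} [NormedRing A] [StarRing A]
    [CStarRing A] [NormedAlgebra ℝ A] [StarModule ℝ A] [CompleteSpace A] {x y : A}
    (hx : x ∈ skewAdjoint A) (hy : y ∈ skewAdjoint A) :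
    ‖exp x - exp y‖ ≤ ‖x - y‖ := by
  let +nondep : NormedAlgebra ℚ A := .restrictScalars ℚ ℝ A
  have exp_smul_mem_unitary {z : A} (hz : z ∈ skewAdjoint A) (t : ℝ) :
      exp (t • z) ∈ unitary A :=
    exp_mem_unitary_of_mem_skewAdjoint (skewAdjoint.smul_mem t hz)
  have norm_deriv (t : ℝ) : ‖exp (t • x) * (x - y) * exp ((1 - t) • y)‖ = ‖x - y‖ := by
    rw [CStarRing.norm_mul_mem_unitary _ (exp_smul_mem_unitary hy _),
      CStarRing.norm_mem_unitary_mul _ (exp_smul_mem_unitary hx _)]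
  simpa using norm_image_sub_le_of_norm_deriv_le_segment_01'
    (fun t _ ↦ (hasDerivAt_exp_smul_mul_exp_one_sub_smul x y t).hasDerivWithinAt)
    (fun t _ ↦ (norm_deriv t).le)

theorem norm_exp_I_smul_sub_exp_I_smul_le {A : Type*} [CStarAlgebra A] {a b : A}
    (ha : IsSelfAdjoint a) (hb : IsSelfAdjoint b) :
    ‖exp (Complex.I • a) - exp (Complex.I • b)‖ ≤ ‖a - b‖ := by
  calc ‖exp (Complex.I • a) - exp (Complex.I • b)‖
      ≤ ‖Complex.I • a - Complex.I • b‖ :=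
        norm_exp_sub_exp_le_of_mem_skewAdjoint (ha.smul_mem_skewAdjoint Complex.conj_I)
          (hb.smul_mem_skewAdjoint Complex.conj_I)
    _ = ‖a - b‖ := by rw [← smul_sub, norm_smul, Complex.norm_I, one_mul]

theorem norm_sum_smul_sub_sum_smul_le {ι R E : Type*} [SeminormedRing R]
    [SeminormedAddCommGroup E] [Module R E] [IsBoundedSMul R E] (t : Finset ι) (r : ι → R)
    (f g : ι → E) :
    ‖∑ j ∈ t, r j • f j - ∑ j ∈ t, r j • g j‖ ≤ ∑ j ∈ t, ‖r j‖ * ‖f j - g j‖ := by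
  simp only [← Finset.sum_sub_distrib, ← smul_sub]
  exact norm_sum_le_of_le t fun j _ ↦ norm_smul_le (r j) (f j - g j)

theorem isSelfAdjoint_sum_smul {ι R A : Type*} [Star R] [AddCommMonoid A] [StarAddMonoid A]
    [SMul R A] [StarModule R A] {t : Finset ι} {r : ι → R} {a : ι → A}
    (hr : ∀ j ∈ t, IsSelfAdjoint (r j)) (ha : ∀ j ∈ t, IsSelfAdjoint (a j)) :
    IsSelfAdjoint (∑ j ∈ t, r j • a j) :=
  isSelfAdjoint_sum t fun j hj ↦ (hr j hj).smul (ha j hj)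

theorem norm_exp_smul_sum_sub_exp_smul_sum_le_general {ι A : Type*} [CStarAlgebra A]
    {t : Finset ι} {b c : ι → A} (hb : ∀ j ∈ t, IsSelfAdjoint (b j))
    (hc : ∀ j ∈ t, IsSelfAdjoint (c j)) (s : ι → ℝ) :
    ‖exp (Complex.I • ∑ j ∈ t, (s j : ℂ) • b j) - exp (Complex.I • ∑ j ∈ t, (s j : ℂ) • c j)‖
      ≤ ∑ j ∈ t, |s j| * ‖b j - c j‖ := by
  have hs : ∀ j ∈ t, IsSelfAdjoint (s j : ℂ) := fun j _ ↦ Complex.conj_ofReal (s j)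
  calc _ ≤ ‖∑ j ∈ t, (s j : ℂ) • b j - ∑ j ∈ t, (s j : ℂ) • c j‖ :=
        norm_exp_I_smul_sub_exp_I_smul_le (isSelfAdjoint_sum_smul hs hb)
          (isSelfAdjoint_sum_smul hs hc)
    _ ≤ ∑ j ∈ t, ‖(s j : ℂ)‖ * ‖b j - c j‖ := norm_sum_smul_sub_sum_smul_le t _ b c
    _ = ∑ j ∈ t, |s j| * ‖b j - c j‖ := by simp only [Complex.norm_real, Real.norm_eq_abs]

/-- Lemma 4.2 of the paper: for tuples of pairwise commuting bounded self-adjoint operators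
`B₁,…,Bₙ` and `C₁,…,Cₙ` on a complex Hilbert space and `s ∈ ℝⁿ`,
`‖exp(i s·B) − exp(i s·C)‖ ≤ ∑ⱼ |sⱼ| ‖Bⱼ − Cⱼ‖`. -/
theorem norm_exp_smul_sum_sub_exp_smul_sum_le
    {H : Type*} [NormedAddCommGroup H] [InnerProductSpace ℂ H] [CompleteSpace H]
    (n : ℕ) (hn : 1 ≤ n)
    (B C : Fin n → (H →L[ℂ] H))
    (hB : ∀ j, IsSelfAdjoint (B j)) (hC : ∀ j, IsSelfAdjoint (C j))
    (hBcomm : ∀ i j, Commute (B i) (B j)) (hCcomm : ∀ i j, Commute (C i) (C j))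
    (s : Fin n → ℝ) :
    ‖NormedSpace.exp (Complex.I • ∑ j, (s j : ℂ) • B j)
        - NormedSpace.exp (Complex.I • ∑ j, (s j : ℂ) • C j)‖
      ≤ ∑ j, |s j| * ‖B j - C j‖ :=
  norm_exp_smul_sum_sub_exp_smul_sum_le_general (fun j _ ↦ hB j) (fun j _ ↦ hC j) s
end

section
/- Let a, μ ∈ ℝ and let sign denote the sign function with sign(0) = 0. (i) If a ≠ 0 and |μ| ≤ |a|, then (1/2)·∫_{−1}^{1} sign(t·a + μ) dt = μ/|a|. (ii) If |μ| ≥ |a|, then (1/2)·∫_{−1}^{1} sign(t·a + μ) dt = sign(μ). -/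
/-!
Away from `0` the absolute value is an antiderivative of the sign function, so
`a * ∫ t in -1..1, sign (t * a + μ) = |a + μ| - |a - μ|`. The right-hand side is symmetric in `a`
and `μ`, and equals twice the sign of whichever of the two dominates times the other; the two
regimes `|μ| ≤ |a|` and `|a| ≤ |μ|` are the two ways of reading this.
-/

theorem monotone_real_sign : Monotone Real.sign := by
  intro x y hxy
  unfold Real.sign
  split_ifs <;> linarith

theorem hasDerivAt_abs_real_sign {x : ℝ} (hx : x ≠ 0) :
    HasDerivAt (fun y : ℝ => |y|) (Real.sign x) x := by
  rcases hx.lt_or_gt with hneg | hpos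
  · simpa only [Real.sign_of_neg hneg] using hasDerivAt_abs_neg hneg
  · simpa only [Real.sign_of_pos hpos] using hasDerivAt_abs_pos hpos

theorem integral_real_sign (p q : ℝ) : ∫ x in p..q, Real.sign x = |q| - |p| :=
  MeasureTheory.integral_eq_of_hasDerivAt_off_countable (fun x : ℝ => |x|) Real.sign
    (Set.countable_singleton 0) continuous_abs.continuousOn
    (fun _ hx => hasDerivAt_abs_real_sign hx.2) monotone_real_sign.intervalIntegrable

theorem mul_integral_real_sign_mul_add (p q a μ : ℝ) :
    a * ∫ t in p..q, Real.sign (t * a + μ) = |q * a + μ| - |p * a + μ| := by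
  simp_rw [mul_comm _ a]
  rw [intervalIntegral.mul_integral_comp_mul_add (f := Real.sign), integral_real_sign]

theorem real_sign_mul_abs (x : ℝ) : Real.sign x * |x| = x := by
  rcases lt_trichotomy x 0 with hneg | rfl | hpos
  · rw [Real.sign_of_neg hneg, abs_of_neg hneg, neg_one_mul, neg_neg]
  · rw [abs_zero, mul_zero]
  · rw [Real.sign_of_pos hpos, abs_of_pos hpos, one_mul]

theorem abs_add_sub_abs_sub_of_abs_le {x y : ℝ} (h : |y| ≤ |x|) :
    |x + y| - |x - y| = 2 * (Real.sign x * y) := by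
  rcases lt_trichotomy x 0 with hneg | rfl | hpos
  · obtain ⟨hlower, hupper⟩ := abs_le.mp (h.trans_eq (abs_of_neg hneg))
    rw [Real.sign_of_neg hneg, abs_of_nonpos (by linarith), abs_of_nonpos (by linarith)]
    ring
  · rw [zero_add, zero_sub, abs_neg, sub_self, Real.sign_zero, zero_mul, mul_zero]
  · obtain ⟨hlower, hupper⟩ := abs_le.mp (h.trans_eq (abs_of_pos hpos))
    rw [Real.sign_of_pos hpos, abs_of_nonneg (by linarith), abs_of_nonneg (by linarith)]
    ring

/-- Explicit computation of the function `k` of equation (3.3) of the paper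
(with the factor `i` removed): for `a, μ ∈ ℝ`,
(i) if `a ≠ 0` and `|μ| ≤ |a|` then `(1/2)∫_{-1}^{1} sign(ta + μ) dt = μ/|a|`;
(ii) if `|μ| ≥ |a|` then `(1/2)∫_{-1}^{1} sign(ta + μ) dt = sign μ`. -/
theorem half_integral_sign_linear (a μ : ℝ) :
    (a ≠ 0 → |μ| ≤ |a| →
      (1 / 2) * (∫ t in (-1 : ℝ)..1, Real.sign (t * a + μ)) = μ / |a|) ∧
    (|a| ≤ |μ| →
      (1 / 2) * (∫ t in (-1 : ℝ)..1, Real.sign (t * a + μ)) = Real.sign μ) := by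
  have mul_integral : a * ∫ t in (-1 : ℝ)..1, Real.sign (t * a + μ) = |a + μ| - |a - μ| := by
    rw [mul_integral_real_sign_mul_add, one_mul, neg_one_mul, neg_add_eq_sub, abs_sub_comm μ a]
  refine ⟨fun ha h => ?_, fun h => ?_⟩
  · rw [abs_add_sub_abs_sub_of_abs_le h] at mul_integral
    rw [eq_div_iff (abs_ne_zero.mpr ha)]
    refine mul_left_cancel₀ (mt Real.sign_eq_zero_iff.mp ha) ?_
    calc Real.sign a * (1 / 2 * (∫ t in (-1 : ℝ)..1, Real.sign (t * a + μ)) * |a|)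
        = 1 / 2 * (Real.sign a * |a| * ∫ t in (-1 : ℝ)..1, Real.sign (t * a + μ)) := by ring
      _ = 1 / 2 * (2 * (Real.sign a * μ)) := by rw [real_sign_mul_abs, mul_integral]
      _ = Real.sign a * μ := by ring
  · rcases eq_or_ne a 0 with rfl | ha
    · simp only [mul_zero, zero_add, intervalIntegral.integral_const, smul_eq_mul]
      ring
    · rw [add_comm a μ, abs_sub_comm a μ, abs_add_sub_abs_sub_of_abs_le h] at mul_integral
      refine mul_left_cancel₀ ha ?_
      linear_combination (1 / 2) * mul_integral
end

section
/- Fix n ≥ 1 and write h⁺(t) = (sign(t) + 1)/2 for t ∈ ℝ. For ε = (ε₁,…,εₙ) ∈ {−1,1}ⁿ, ξ ∈ ℝⁿ with ξ ≠ 0, and μ ∈ ℝ, define r_ε(ξ, μ) = ((ε·ξ)/‖ξ‖₂) · ∏_{j=1}^{n} h⁺(εⱼξⱼ) · ( h⁺(μ)·h⁺(ε·ξ − μ) + h⁺(−μ)·h⁺(ε·ξ + μ) ), where ε·ξ = ∑ⱼ εⱼξⱼ, and set R(ξ, μ) = ∑_{ε ∈ {−1,1}ⁿ} r_ε(ξ,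 μ). Then R(ξ, μ) = ‖ξ‖₁/‖ξ‖₂ whenever |μ| < ‖ξ‖₁, and R(ξ, μ) = 0 whenever |μ| > ‖ξ‖₁. -/
open Finset

/-!
Since `h⁺(t) + h⁺(-t) = 1`, the weights `∏ⱼ h⁺(εⱼξⱼ)` sum to `1` over `ε`, and a weight is nonzero
only if every `εⱼξⱼ` is nonnegative, i.e. `εⱼξⱼ = |ξⱼ|`. Averaging a function of `(εⱼξⱼ)ⱼ` against
them therefore evaluates it at `(|ξⱼ|)ⱼ`, which turns `ε·ξ` into `‖ξ‖₁`; the remaining factor is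
`h⁺(ε·ξ - |μ|)`.
-/

/-- The Heaviside function `h⁺`, with the value `1 / 2` at `0`. -/
noncomputable def heaviside (t : ℝ) : ℝ := (Real.sign t + 1) / 2

/-- The sign `±1` encoded by a Boolean, so that `ι → Bool` stands for `{-1, 1}^ι`. -/
def boolSign (b : Bool) : ℝ := if b then 1 else -1

theorem heaviside_of_pos {t : ℝ} (ht : 0 < t) : heaviside t = 1 := by
  simp [heaviside, Real.sign_of_pos ht]

theorem heaviside_of_neg {t : ℝ} (ht : t < 0) : heaviside t = 0 := by
  simp [heaviside, Real.sign_of_neg ht]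

theorem heaviside_add_heaviside_neg (t : ℝ) : heaviside t + heaviside (-t) = 1 := by
  simp only [heaviside, Real.sign_neg]
  ring

theorem heaviside_mul_sub_add_heaviside_neg_mul_add (μ s : ℝ) :
    heaviside μ * heaviside (s - μ) + heaviside (-μ) * heaviside (s + μ) =
      heaviside (s - |μ|) := by
  rcases lt_trichotomy μ 0 with hμ | rfl | hμ
  · simp [heaviside_of_neg hμ, heaviside_of_pos (neg_pos.2 hμ), abs_of_neg hμ]
  · rw [sub_zero, add_zero, abs_zero, sub_zero, ← add_mul, heaviside_add_heaviside_neg, one_mul]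
  · simp [heaviside_of_pos hμ, heaviside_of_neg (neg_neg_iff_pos.2 hμ), abs_of_pos hμ]

theorem abs_boolSign_mul (b : Bool) (x : ℝ) : |boolSign b * x| = |x| := by
  cases b <;> simp [boolSign]

section Orthant

variable {ι : Type*} [Fintype ι]

theorem nonneg_of_prod_heaviside_ne_zero {η : ι → ℝ} (h : ∏ j, heaviside (η j) ≠ 0) : 0 ≤ η :=
  fun j => not_lt.1 fun hj => prod_ne_zero_iff.1 h j (mem_univ j) (heaviside_of_neg hj)

theorem prod_heaviside_smul_eq_smul_abs {E : Type*} [Zero E] [SMulWithZero ℝ E]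
    (F : (ι → ℝ) → E) (η : ι → ℝ) :
    (∏ j, heaviside (η j)) • F η = (∏ j, heaviside (η j)) • F |η| := by
  by_cases h : ∏ j, heaviside (η j) = 0
  · rw [h, zero_smul, zero_smul]
  · rw [abs_of_nonneg (nonneg_of_prod_heaviside_ne_zero h)]

variable [DecidableEq ι]

theorem sum_prod_heaviside_boolSign_mul (ξ : ι → ℝ) :
    ∑ ε : ι → Bool, ∏ j, heaviside (boolSign (ε j) * ξ j) = 1 := by
  calc ∑ ε : ι → Bool, ∏ j, heaviside (boolSign (ε j) * ξ j)
      = ∏ j, ∑ b, heaviside (boolSign b * ξ j) :=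
        (Fintype.prod_sum fun j b => heaviside (boolSign b * ξ j)).symm
    _ = 1 := prod_eq_one fun j _ => by
        simp [boolSign, heaviside_add_heaviside_neg]

theorem sum_prod_heaviside_smul_boolSign_mul {E : Type*} [AddCommMonoid E] [Module ℝ E]
    (F : (ι → ℝ) → E) (ξ : ι → ℝ) :
    ∑ ε : ι → Bool, (∏ j, heaviside (boolSign (ε j) * ξ j)) • F (fun j => boolSign (ε j) * ξ j) =
      F |ξ| := by
  have abs_signed (ε : ι → Bool) : |fun j => boolSign (ε j) * ξ j| = |ξ| :=
    funext fun j => abs_boolSign_mul (ε j) (ξ j)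
  calc ∑ ε : ι → Bool, (∏ j, heaviside (boolSign (ε j) * ξ j)) • F (fun j => boolSign (ε j) * ξ j)
      = ∑ ε : ι → Bool, (∏ j, heaviside (boolSign (ε j) * ξ j)) • F |ξ| :=
        sum_congr rfl fun ε _ => by rw [prod_heaviside_smul_eq_smul_abs, abs_signed]
    _ = F |ξ| := by rw [← sum_smul, sum_prod_heaviside_boolSign_mul, one_smul]

end Orthant

/-- Identity (3.6) in the proof of Lemma 3.1 of the paper (with the factor `i` removed).
Here `ε ∈ {-1,1}ⁿ` is encoded by `ε : Fin n → Bool` (`true ↦ 1`, `false ↦ -1`),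
`h⁺(t) = (sign t + 1)/2`, `‖ξ‖₁ = ∑ᵢ |ξᵢ|` and `‖ξ‖₂ = √(∑ᵢ ξᵢ²)`. -/
theorem R_of_sum_r_eps (n : ℕ) (hn : 1 ≤ n) (ξ : Fin n → ℝ) (hξ : ξ ≠ 0) (μ : ℝ) :
    let hp : ℝ → ℝ := fun t => (Real.sign t + 1) / 2
    let sgn : Bool → ℝ := fun b => if b then 1 else -1
    let r : (Fin n → Bool) → ℝ := fun ε =>
      ((∑ j, sgn (ε j) * ξ j) / Real.sqrt (∑ i, (ξ i) ^ 2))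
        * (∏ j, hp (sgn (ε j) * ξ j))
        * (hp μ * hp ((∑ j, sgn (ε j) * ξ j) - μ)
            + hp (-μ) * hp ((∑ j, sgn (ε j) * ξ j) + μ))
    let R : ℝ := ∑ ε : Fin n → Bool, r ε
    (|μ| < ∑ i, |ξ i| → R = (∑ i, |ξ i|) / Real.sqrt (∑ i, (ξ i) ^ 2)) ∧
    ((∑ i, |ξ i|) < |μ| → R = 0) := by
  intro hp sgn r R
  let F (η : Fin n → ℝ) : ℝ := (∑ j, η j) / √(∑ i, ξ i ^ 2) * heaviside (∑ j, η j - |μ|)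
  have r_eq (ε : Fin n → Bool) : r ε =
      (∏ j, heaviside (boolSign (ε j) * ξ j)) • F (fun j => boolSign (ε j) * ξ j) := by
    change _ * (∏ j, heaviside (boolSign (ε j) * ξ j)) *
      (heaviside μ * heaviside (_ - μ) + heaviside (-μ) * heaviside (_ + μ)) = _
    rw [heaviside_mul_sub_add_heaviside_neg_mul_add, mul_right_comm, mul_comm]
    rfl
  have R_eq : R = (∑ i, |ξ i|) / √(∑ i, ξ i ^ 2) * heaviside (∑ i, |ξ i| - |μ|) :=
    (sum_congr rfl fun ε _ => r_eq ε).trans (sum_prod_heaviside_smul_boolSign_mul F ξ)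
  constructor
  · intro hμ
    rw [R_eq, heaviside_of_pos (sub_pos.2 hμ), mul_one]
  · intro hμ
    rw [R_eq, heaviside_of_neg (sub_neg.2 hμ), mul_zero]
end

section
/- Let n, m, N ≥ 1 be integers, let f : ℝⁿ → ℝ be Lipschitz with constant at most 1 (with respect to the Euclidean norm), and let B : ℝⁿ → ℝ be a C^∞ function with B(0) = 1, support contained in the closed cube [−1/(2m), 1/(2m)]ⁿ, and Lipschitz constant at most L. Define f_N : ℝⁿ → ℝ by f_N(ξ) = f(ξ) + ∑_{k ∈ ℤⁿ} ( ⌊N f(k/m)⌋/N − f(k/m) ) · B(ξ − k/m) (for each ξ at most one summand is nonzero). Then: (i) f_N(k/m) = ⌊N f(k/m)⌋/N for every k ∈ ℤⁿ, so N·f_N(k/m) ∈ ℤ; (ii) f_N is Lipschitz with constant at most 1 + L/N; (iii) f − f_N is Lipschitz with constant at most L/N. -/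
open Finset

/-!
Corrections supported near different nodes do not interact: on a segment from the support of one
bump to the disjoint support of another there is, by the intermediate value theorem, a point where
both bumps vanish, and splitting the segment there shows that a sum of `K`-Lipschitz functions with
disjoint supports is still `K`-Lipschitz. The support of the continuous function `B` is open, hence
contained in the open cube, so its translates to the points `k / m` have disjoint supports. Since
the correction coefficients are at most `1 / N` in absolute value, each correction is
`L / N`-Lipschitz, and so is their sum.
-/

open Function NNReal WithLp

section DisjointSupport

variable {ι E F : Type*}

theorem exists_forall_ne_eq_zero_of_disjoint_support [Nonempty ι] [Zero F] {g : ι → E → F}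
    (hg : Pairwise (Disjoint on fun i => support (g i))) (x : E) :
    ∃ i, ∀ j ≠ i, g j x = 0 := by
  by_cases h : ∃ i, g i x ≠ 0
  · obtain ⟨i, hi⟩ := h
    exact ⟨i, fun j hj => by_contra fun hjx => (hg hj).ne_of_mem hjx hi rfl⟩
  · push Not at h
    exact ⟨Classical.arbitrary ι, fun j _ => h j⟩

variable [NormedAddCommGroup F]

theorem exists_mem_segment_eq_zero_of_disjoint_support [AddCommGroup E] [Module ℝ E]
    [TopologicalSpace E] [IsTopologicalAddGroup E] [ContinuousSMul ℝ E] {u v : E → F}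
    (hu : Continuous u) (hv : Continuous v) (huv : Disjoint (support u) (support v)) {x y : E}
    (hvx : v x = 0) (huy : u y = 0) :
    ∃ z ∈ segment ℝ x y, u z = 0 ∧ v z = 0 := by
  have hcont : ContinuousOn (fun z => ‖u z‖ - ‖v z‖) (segment ℝ x y) := by fun_prop
  obtain ⟨z, hz, hz0⟩ : ∃ z ∈ segment ℝ x y, ‖u z‖ - ‖v z‖ = 0 :=
    (convex_segment x y).isPreconnected.intermediate_value (right_mem_segment ℝ x y)
      (left_mem_segment ℝ x y) hcont (by simp [hvx, huy])
  have hnorm : ‖u z‖ = ‖v z‖ := sub_eq_zero.mp hz0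
  have huz : u z = 0 := by
    by_contra h
    have hvz : v z ≠ 0 := norm_ne_zero_iff.mp (hnorm ▸ norm_ne_zero_iff.mpr h)
    exact huv.ne_of_mem h hvz rfl
  exact ⟨z, hz, huz, by simpa [huz, eq_comm] using hnorm⟩

variable [NormedAddCommGroup E] [NormedSpace ℝ E] {K : ℝ≥0}

theorem norm_add_norm_le_mul_dist_of_disjoint_support {u v : E → F} (hu : LipschitzWith K u)
    (hv : LipschitzWith K v) (huv : Disjoint (support u) (support v)) {x y : E}
    (hvx : v x = 0) (huy : u y = 0) :
    ‖u x‖ + ‖v y‖ ≤ K * dist x y := by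
  obtain ⟨z, hz, huz, hvz⟩ :=
    exists_mem_segment_eq_zero_of_disjoint_support hu.continuous hv.continuous huv hvx huy
  calc ‖u x‖ + ‖v y‖ = dist (u x) (u z) + dist (v z) (v y) := by simp [huz, hvz]
    _ ≤ K * dist x z + K * dist z y := add_le_add (hu.dist_le_mul x z) (hv.dist_le_mul z y)
    _ = K * dist x y := by rw [← mul_add, dist_add_dist_of_mem_segment hz]

theorem lipschitzWith_tsum_of_disjoint_support {g : ι → E → F}
    (hg : ∀ i, LipschitzWith K (g i)) (hdisj : Pairwise (Disjoint on fun i => support (g i))) :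
    LipschitzWith K fun x => ∑' i, g i x := by
  rcases isEmpty_or_nonempty ι with _ | _
  · simpa using LipschitzWith.const' (0 : F)
  refine LipschitzWith.of_dist_le_mul fun x y => ?_
  obtain ⟨i, hi⟩ := exists_forall_ne_eq_zero_of_disjoint_support hdisj x
  obtain ⟨j, hj⟩ := exists_forall_ne_eq_zero_of_disjoint_support hdisj y
  rw [tsum_eq_single i hi, tsum_eq_single j hj]
  rcases eq_or_ne i j with rfl | hij
  · exact (hg i).dist_le_mul x y
  · exact (dist_le_norm_add_norm _ _).trans <|
      norm_add_norm_le_mul_dist_of_disjoint_support (hg i) (hg j) (hdisj hij)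
        (hi j hij.symm) (hj i hij)

end DisjointSupport

/-- The superposition of the translates of a bump `B` to the nodes `p k`, with weights `c k`; adding
it to a function corrects the values of that function at the nodes. Being a `tsum`, it is meaningful
only where the family is summable, for instance when the translates have disjoint supports. -/
noncomputable def bumpSum {ι E F : Type*} [Sub E] [AddCommMonoid F] [TopologicalSpace F]
    [SMul ℝ F] (p : ι → E) (c : ι → ℝ) (B : E → F) (x : E) : F :=
  ∑' k, c k • B (x - p k)

section BumpSum

variable {ι E F : Type*} {p : ι → E} {B : E → F}

theorem bumpSum_apply_node [AddGroup E] [AddCommMonoid F] [TopologicalSpace F]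
    [SMulZeroClass ℝ F] (hdisj : Pairwise (Disjoint on fun k => support fun x => B (x - p k)))
    (hB0 : B 0 ≠ 0) (c : ι → ℝ) (k : ι) : bumpSum p c B (p k) = c k • B 0 := by
  rw [bumpSum, tsum_eq_single k, sub_self]
  intro j hj
  have hjk : B (p k - p j) = 0 :=
    by_contra fun h => (hdisj hj).ne_of_mem h (by simpa using hB0) rfl
  rw [hjk, smul_zero]

theorem lipschitzWith_bumpSum [NormedAddCommGroup E] [NormedSpace ℝ E] [NormedAddCommGroup F]
    [NormedSpace ℝ F] {C L : ℝ≥0} {c : ι → ℝ} (hc : ∀ k, ‖c k‖₊ ≤ C)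
    (hB : LipschitzWith L B)
    (hdisj : Pairwise (Disjoint on fun k => support fun x => B (x - p k))) :
    LipschitzWith (C * L) (bumpSum p c B) := by
  have hterm (k : ι) : LipschitzWith (C * L) fun x => c k • B (x - p k) :=
    ((lipschitzWith_smul (c k)).weaken (hc k)).comp (by
      simpa only [comp_def, id, add_zero, mul_one] using
        hB.comp (LipschitzWith.id.sub (LipschitzWith.const (p k))))
  exact lipschitzWith_tsum_of_disjoint_support hterm fun _ _ hij =>
    (hdisj hij).mono (support_const_smul_subset _ _) (support_const_smul_subset _ _)

end BumpSum

section Cube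

variable {ι F : Type*} [TopologicalSpace F] [T1Space F] [Zero F] {B : (ι → ℝ) → F}

theorem abs_lt_of_mem_support_of_support_subset_cube (hB : Continuous B) {r : ℝ}
    (hsupp : support B ⊆ {ξ | ∀ i, |ξ i| ≤ r}) {ξ : ι → ℝ} (hξ : ξ ∈ support B) (i : ι) :
    |ξ i| < r := by
  have hopen : IsOpen (eval i '' support B) :=
    isOpenMap_eval i _ (isOpen_compl_singleton.preimage hB)
  have hsub : eval i '' support B ⊆ Set.Icc (-r) r :=
    Set.image_subset_iff.mpr fun η hη => abs_le.mp (hsupp hη i)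
  have hint : ξ i ∈ interior (Set.Icc (-r) r) :=
    interior_maximal hsub hopen (Set.mem_image_of_mem _ hξ)
  rw [interior_Icc] at hint
  exact abs_lt.mpr hint

theorem pairwise_disjoint_support_sub_lattice (hB : Continuous B) {m : ℝ} (hm : 0 < m)
    (hsupp : support B ⊆ {ξ | ∀ i, |ξ i| ≤ 1 / (2 * m)}) :
    Pairwise (Disjoint on fun k : ι → ℤ => support fun ξ => B (ξ - fun i => (k i : ℝ) / m)) := by
  intro k k' hkk'
  refine Set.disjoint_left.mpr fun ξ hk hk' => ?_
  obtain ⟨i, hi⟩ := Function.ne_iff.mp hkk'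
  have hdist : |(k i - k' i : ℝ) / m| < 1 / m :=
    calc |(k i - k' i : ℝ) / m|
        = |(ξ i - k' i / m) - (ξ i - k i / m)| := by ring_nf
      _ ≤ |ξ i - k' i / m| + |ξ i - k i / m| := abs_sub _ _
      _ < 1 / (2 * m) + 1 / (2 * m) :=
        add_lt_add (abs_lt_of_mem_support_of_support_subset_cube hB hsupp hk' i)
          (abs_lt_of_mem_support_of_support_subset_cube hB hsupp hk i)
      _ = 1 / m := by ring
  rw [abs_div, abs_of_pos hm, div_lt_div_iff_of_pos_right hm] at hdist
  have hlt : |k i - k' i| < 1 := by exact_mod_cast hdist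
  exact hi (sub_eq_zero.mp (Int.abs_lt_one_iff.mp hlt))

end Cube

theorem abs_floor_mul_div_sub_le {R : Type*} [Field R] [LinearOrder R] [IsStrictOrderedRing R]
    [FloorRing R] {N : R} (hN : 0 < N) (a : R) : |⌊N * a⌋ / N - a| ≤ 1 / N := by
  have hfract : a - ⌊N * a⌋ / N = Int.fract (N * a) / N := by
    rw [Int.fract]
    field_simp
  rw [abs_sub_comm, hfract, abs_of_nonneg (div_nonneg (Int.fract_nonneg _) hN.le)]
  gcongr
  exact (Int.fract_lt_one _).le

theorem nonneg_of_dist_le_mul_dist {α β : Type*} [MetricSpace α] [Nontrivial α]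
    [PseudoMetricSpace β] {f : α → β} {K : ℝ} (hf : ∀ x y, dist (f x) (f y) ≤ K * dist x y) :
    0 ≤ K := by
  obtain ⟨x, y, hxy⟩ := exists_pair_ne α
  exact nonneg_of_mul_nonneg_left (dist_nonneg.trans (hf x y)) (dist_pos.mpr hxy)

section Euclidean

variable {ι : Type*} [Fintype ι]

theorem dist_comp_ofLp_le_iff {f : (ι → ℝ) → ℝ} {K : ℝ} :
    (∀ x y : EuclideanSpace ℝ ι, dist (f (ofLp x)) (f (ofLp y)) ≤ K * dist x y) ↔
      ∀ ξ ξ' : ι → ℝ, |f ξ - f ξ'| ≤ K * √(∑ i, (ξ i - ξ' i) ^ 2) := by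
  simp only [EuclideanSpace.dist_eq, Real.dist_eq, sq_abs]
  exact ⟨fun h ξ ξ' => h (toLp 2 ξ) (toLp 2 ξ'), fun h x y => h (ofLp x) (ofLp y)⟩

theorem continuous_of_abs_sub_le {f : (ι → ℝ) → ℝ} {K : ℝ}
    (hf : ∀ ξ ξ' : ι → ℝ, |f ξ - f ξ'| ≤ K * √(∑ i, (ξ i - ξ' i) ^ 2)) : Continuous f :=
  (LipschitzWith.of_dist_le' (dist_comp_ofLp_le_iff.mpr hf)).continuous.comp
    (PiLp.continuous_toLp 2 _)

theorem abs_bumpSum_sub_le [Nonempty ι] {κ : Type*} {p : κ → ι → ℝ} {c : κ → ℝ} {C L : ℝ}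
    (hC : 0 ≤ C) (hc : ∀ k, |c k| ≤ C) {B : (ι → ℝ) → ℝ}
    (hB : ∀ ξ ξ' : ι → ℝ, |B ξ - B ξ'| ≤ L * √(∑ i, (ξ i - ξ' i) ^ 2))
    (hdisj : Pairwise (Disjoint on fun k => support fun ξ => B (ξ - p k))) (ξ ξ' : ι → ℝ) :
    |bumpSum p c B ξ - bumpSum p c B ξ'| ≤ C * L * √(∑ i, (ξ i - ξ' i) ^ 2) := by
  have hB' := dist_comp_ofLp_le_iff.mpr hB
  lift L to ℝ≥0 using nonneg_of_dist_le_mul_dist hB'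
  lift C to ℝ≥0 using hC
  have hlip : LipschitzWith (C * L)
      (bumpSum (fun k => toLp 2 (p k)) c fun x : EuclideanSpace ℝ ι => B (ofLp x)) :=
    lipschitzWith_bumpSum hc (LipschitzWith.of_dist_le_mul hB') fun _ _ hkk' =>
      (hdisj hkk').preimage ofLp
  exact dist_comp_ofLp_le_iff.mp (by exact_mod_cast hlip.dist_le_mul) ξ ξ'

end Euclidean

theorem discretization_fN_general {ι : Type*} [Fintype ι] [Nonempty ι] {m N : ℝ} (hm : 0 < m)
    (hN : 0 < N) {f B fN : (ι → ℝ) → ℝ} {K L : ℝ}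
    (hf : ∀ ξ ξ' : ι → ℝ, |f ξ - f ξ'| ≤ K * √(∑ i, (ξ i - ξ' i) ^ 2))
    (hB0 : B 0 = 1) (hBsupp : support B ⊆ {ξ | ∀ i, |ξ i| ≤ 1 / (2 * m)})
    (hBlip : ∀ ξ ξ' : ι → ℝ, |B ξ - B ξ'| ≤ L * √(∑ i, (ξ i - ξ' i) ^ 2))
    (hfN : ∀ ξ, fN ξ = f ξ + ∑' k : ι → ℤ,
      (⌊N * f (fun i => k i / m)⌋ / N - f (fun i => k i / m)) * B (fun i => ξ i - k i / m)) :
    (∀ k : ι → ℤ, fN (fun i => k i / m) = ⌊N * f (fun i => k i / m)⌋ / N ∧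
      ∃ z : ℤ, N * fN (fun i => k i / m) = z) ∧
    (∀ ξ ξ' : ι → ℝ, |fN ξ - fN ξ'| ≤ (K + L / N) * √(∑ i, (ξ i - ξ' i) ^ 2)) ∧
    (∀ ξ ξ' : ι → ℝ,
      |(f ξ - fN ξ) - (f ξ' - fN ξ')| ≤ L / N * √(∑ i, (ξ i - ξ' i) ^ 2)) := by
  let p (k : ι → ℤ) (i : ι) : ℝ := k i / m
  let c (k : ι → ℤ) : ℝ := ⌊N * f (p k)⌋ / N - f (p k)
  have hfN' (ξ : ι → ℝ) : fN ξ = f ξ + bumpSum p c B ξ := hfN ξ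
  have hdisj : Pairwise (Disjoint on fun k => support fun ξ => B (ξ - p k)) :=
    pairwise_disjoint_support_sub_lattice (continuous_of_abs_sub_le hBlip) hm hBsupp
  have hnode (k : ι → ℤ) : fN (p k) = ⌊N * f (p k)⌋ / N := by
    rw [hfN', bumpSum_apply_node hdisj (hB0 ▸ one_ne_zero), hB0, smul_eq_mul, mul_one,
      add_sub_cancel]
  have hcorr (ξ ξ' : ι → ℝ) :
      |bumpSum p c B ξ - bumpSum p c B ξ'| ≤ L / N * √(∑ i, (ξ i - ξ' i) ^ 2) :=
    (abs_bumpSum_sub_le (one_div_pos.mpr hN).le (fun k => abs_floor_mul_div_sub_le hN (f (p k)))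
      hBlip hdisj ξ ξ').trans_eq (by rw [one_div_mul_eq_div])
  refine ⟨fun k => ⟨hnode k, ⌊N * f (p k)⌋, ?_⟩, fun ξ ξ' => ?_, fun ξ ξ' => ?_⟩
  · exact (congrArg (N * ·) (hnode k)).trans (mul_div_cancel₀ _ hN.ne')
  · rw [hfN', hfN', add_sub_add_comm, add_mul]
    exact (abs_add_le _ _).trans (add_le_add (hf ξ ξ') (hcorr ξ ξ'))
  · rw [hfN', hfN', sub_add_cancel_left, sub_add_cancel_left, neg_sub_neg, abs_sub_comm]
    exact hcorr ξ ξ'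

/-- The discretization construction establishing Assumption 3 in the proof of
Theorem 5.1 of the paper. `f : ℝⁿ → ℝ` is `1`-Lipschitz for the Euclidean norm, `B` is a
smooth bump with `B(0) = 1`, support in the cube `[−1/(2m), 1/(2m)]ⁿ` and Lipschitz
constant at most `L`, and
`f_N(ξ) = f(ξ) + ∑_{k ∈ ℤⁿ} (⌊N f(k/m)⌋/N − f(k/m)) B(ξ − k/m)`.
Then (i) `f_N(k/m) = ⌊N f(k/m)⌋/N`, so `N f_N(k/m) ∈ ℤ`; (ii) `f_N` is Lipschitz with
constant at most `1 + L/N`; (iii) `f − f_N` is Lipschitz with constant at most `L/N`. -/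
theorem discretization_fN (n m N : ℕ) (hn : 1 ≤ n) (hm : 1 ≤ m) (hN : 1 ≤ N)
    (f : (Fin n → ℝ) → ℝ)
    (hf : ∀ ξ ξ' : Fin n → ℝ, |f ξ - f ξ'| ≤ Real.sqrt (∑ i, (ξ i - ξ' i) ^ 2))
    (L : ℝ) (B : (Fin n → ℝ) → ℝ)
    (hB : ContDiff ℝ (⊤ : ℕ∞) B) (hB0 : B 0 = 1)
    (hBsupp : Function.support B ⊆ {ξ : Fin n → ℝ | ∀ i, |ξ i| ≤ 1 / (2 * m)})
    (hBlip : ∀ ξ ξ' : Fin n → ℝ, |B ξ - B ξ'| ≤ L * Real.sqrt (∑ i, (ξ i - ξ' i) ^ 2))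
    (fN : (Fin n → ℝ) → ℝ)
    (hfN : ∀ ξ : Fin n → ℝ, fN ξ = f ξ + ∑' k : Fin n → ℤ,
      ((⌊(N : ℝ) * f (fun i => (k i : ℝ) / m)⌋ : ℝ) / N - f (fun i => (k i : ℝ) / m))
        * B (fun i => ξ i - (k i : ℝ) / m)) :
    -- (i)
    (∀ k : Fin n → ℤ,
      fN (fun i => (k i : ℝ) / m)
          = (⌊(N : ℝ) * f (fun i => (k i : ℝ) / m)⌋ : ℝ) / N ∧
      ∃ z : ℤ, (N : ℝ) * fN (fun i => (k i : ℝ) / m) = (z : ℝ)) ∧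
    -- (ii)
    (∀ ξ ξ' : Fin n → ℝ,
      |fN ξ - fN ξ'| ≤ (1 + L / N) * Real.sqrt (∑ i, (ξ i - ξ' i) ^ 2)) ∧
    -- (iii)
    (∀ ξ ξ' : Fin n → ℝ,
      |(f ξ - fN ξ) - (f ξ' - fN ξ')| ≤ (L / N) * Real.sqrt (∑ i, (ξ i - ξ' i) ^ 2)) := by
  have : Nonempty (Fin n) := Fin.pos_iff_nonempty.mp hn
  exact discretization_fN_general (Nat.cast_pos.mpr hm) (Nat.cast_pos.mpr hN)
    (by simpa only [one_mul] using hf) hB0 hBsupp hBlip hfN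
end

section
/- There exists a constant C > 0 such that for every d ≥ 1, every Lipschitz function f : ℝ → ℝ with Lipschitz constant at most 1, every d×d Hermitian complex matrix A with spectral decomposition A = U·diag(μ₁,…,μ_d)·U* (U unitary, μᵢ ∈ ℝ), every x ∈ M_d(ℂ), and every nonempty subset S of {1,…,d}, the following holds: setting f(A) = U·diag(f(μ₁),…,f(μ_d))·U* and T = f(A)·x − x·f(A), one has ∑_{i ∈ S} σᵢ(T) ≤ C·log(1 + |S|)·‖A·x − x·A‖₁, where the σᵢ(T) are the singular values of T (in any fixed enumeration) and ‖·‖₁ is the Schatten 1-norm (sum of all singular values). -/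
open Finset Matrix

/-- The singular values of a square complex matrix: the square roots of the eigenvalues of
the positive semidefinite Hermitian matrix `Mᴴ * M`. -/
noncomputable def singularValues {d : ℕ} (M : Matrix (Fin d) (Fin d) ℂ) : Fin d → ℝ :=
  fun i => Real.sqrt ((Matrix.isHermitian_conjTranspose_mul_self M).eigenvalues i)

/-- The Schatten `p`-norm of a square complex matrix: `(∑ᵢ σᵢ(M)^p)^(1/p)`. -/
noncomputable def schattenNorm {d : ℕ} (p : ℝ) (M : Matrix (Fin d) (Fin d) ℂ) : ℝ :=
  (∑ i, singularValues M i ^ p) ^ (1 / p)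

/-!
In an eigenbasis of `A` the commutator `[f(A), x]` is the Schur product of `Y = [A, x]` with the
Löwner matrix of divided differences of `f`, so it suffices to bound that Schur multiplier. A
singular value decomposition of `Y` and the trace duality
`∑_{i ∈ S} σᵢ(T) = tr(Xᴴ T)`, with `XᴴX ≤ 1` and `‖X‖₂² ≤ |S|`, reduce this to `Y = a ⊗ b` with unit
vectors `a`, `b`.

Cut the spectrum into `N` consecutive cells of roughly equal mass for `|a|² + |b|²`. Moving the
point in the shorter of two cells to a marked point of that cell changes the divided difference by
`O(1 / (k + 1))`, where `k` counts the cells in between that are at least as long. For each cell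
these errors are square summable over the longer cells, so the Schur product is within `O(N^{-1/2})`
in Hilbert–Schmidt norm of a matrix of rank `O(N)`. Along `N = 4^n`, each difference of consecutive
approximants has trace norm `O(1)`, and the remainder is negligible against `X` once `4^n ≥ |S|`:
hence the factor `log(1 + |S|)`.
-/

open scoped NNReal

section Slope

variable {K : ℝ≥0} {f : ℝ → ℝ}

lemma abs_slope_le_of_lipschitzWith (hf : LipschitzWith K f) (x y : ℝ) : |slope f x y| ≤ K := by
  rw [slope_def_field, abs_div]
  exact div_le_of_le_mul₀ (abs_nonneg _) K.2 (hf.dist_le_mul y x)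

lemma abs_slope_sub_slope_mul_le_of_lipschitzWith (hf : LipschitzWith K f) (x y z : ℝ) :
    |slope f x y - slope f x z| * |y - x| ≤ 2 * K * |y - z| := by
  have hy : (y - x) * slope f x y = f y - f x := by simpa using sub_smul_slope f x y
  have hz : (z - x) * slope f x z = f z - f x := by simpa using sub_smul_slope f x z
  calc |slope f x y - slope f x z| * |y - x|
      = |(f y - f z) - (y - z) * slope f x z| := by
        rw [← abs_mul]
        congr 1
        linear_combination hy - hz
    _ ≤ |f y - f z| + |y - z| * |slope f x z| := by
        rw [← abs_mul]
        exact abs_sub _ _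
    _ ≤ K * |y - z| + |y - z| * K :=
        add_le_add (hf.dist_le_mul y z) (by gcongr; exact abs_slope_le_of_lipschitzWith hf x z)
    _ = 2 * K * |y - z| := by ring

lemma abs_slope_sub_slope_le_of_separated (hf : LipschitzWith K f) {x y z l : ℝ} (k : ℕ)
    (hyz : |y - z| ≤ l) (hxy : k * l ≤ |y - x|) :
    |slope f x y - slope f x z| ≤ 4 * K / (k + 1) := by
  have hl : 0 ≤ l := (abs_nonneg _).trans hyz
  set e := |slope f x y - slope f x z| with he
  have hnear : e ≤ 2 * K := by
    linarith [abs_sub (slope f x y) (slope f x z), abs_slope_le_of_lipschitzWith hf x y,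
      abs_slope_le_of_lipschitzWith hf x z]
  have hfar : k * e ≤ 2 * K := by
    rcases hl.eq_or_lt with rfl | hl
    · obtain rfl : y = z := sub_eq_zero.1 (abs_nonpos_iff.1 hyz)
      simp [he]
    · refine le_of_mul_le_mul_right ?_ hl
      calc k * e * l = e * (k * l) := by ring
        _ ≤ e * |y - x| := by gcongr
        _ ≤ 2 * K * |y - z| := abs_slope_sub_slope_mul_le_of_lipschitzWith hf x y z
        _ ≤ 2 * K * l := by gcongr
  rw [le_div_iff₀ (by positivity)]
  linarith

end Slope

section Gap

lemma sum_card_filter_lt {α M : Type*} [LinearOrder α] [AddCommMonoid M] (g : ℕ → M)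
    (s : Finset α) : ∑ a ∈ s, g #{b ∈ s | b < a} = ∑ k ∈ range #s, g k := by
  induction s using Finset.induction_on_max with
  | empty => simp
  | insert a s ha ih =>
    have hnot : a ∉ s := fun h => (ha a h).false
    have hmax : {b ∈ insert a s | b < a} = s := by grind
    have hrest : ∀ b ∈ s, {c ∈ insert a s | c < b} = {c ∈ s | c < b} := by grind
    rw [sum_insert hnot, card_insert_of_notMem hnot, sum_range_succ, hmax, add_comm, ← ih]
    congr 1
    exact sum_congr rfl fun b hb => by rw [hrest b hb]

lemma sum_card_filter_gt {α M : Type*} [LinearOrder α] [AddCommMonoid M] (g : ℕ → M)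
    (s : Finset α) : ∑ a ∈ s, g #{b ∈ s | a < b} = ∑ k ∈ range #s, g k :=
  sum_card_filter_lt (α := αᵒᵈ) g s

lemma sum_range_inv_succ_sq_le (n : ℕ) : ∑ k ∈ range n, (((k : ℝ) + 1) ^ 2)⁻¹ ≤ 2 := by
  have h := sum_Ioo_inv_sq_le (α := ℝ) 0 (n + 1)
  rw [← Finset.Ico_succ_left_eq_Ioo, Finset.sum_Ico_eq_sum_range] at h
  simpa [add_comm] using h

variable {α β : Type*} [LinearOrder α] [LinearOrder β]

lemma sum_inv_succ_card_between_sq_le (s : Finset α) (a : α) :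
    ∑ b ∈ s, (((#{c ∈ s | min b a < c ∧ c < max b a} : ℝ) + 1) ^ 2)⁻¹ ≤ 5 := by
  set g : ℕ → ℝ := fun k => (((k : ℝ) + 1) ^ 2)⁻¹ with hg
  set n : α → ℕ := fun b => #{c ∈ s | min b a < c ∧ c < max b a}
  have hleft : ∑ b ∈ s with b < a, g (n b) ≤ 2 := by
    refine le_of_eq_of_le ?_ (sum_range_inv_succ_sq_le #{b ∈ s | b < a})
    rw [← hg, ← sum_card_filter_gt g]
    exact sum_congr rfl fun b hb => congrArg (g #·) (by ext c; grind)
  have hright : ∑ b ∈ s with a < b, g (n b) ≤ 2 := by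
    refine le_of_eq_of_le ?_ (sum_range_inv_succ_sq_le #{b ∈ s | a < b})
    rw [← hg, ← sum_card_filter_lt g]
    exact sum_congr rfl fun b hb => congrArg (g #·) (by ext c; grind)
  have hself : ∑ b ∈ s with b = a, g (n b) ≤ 1 := by
    have h : g (n a) ≤ 1 := inv_le_one_of_one_le₀ (one_le_pow₀ (by simp))
    rw [filter_eq']
    split_ifs <;> simp [h]
  calc ∑ b ∈ s, g (n b)
    _ = ∑ b ∈ s with b < a, g (n b) + ∑ b ∈ s with a < b, g (n b)
        + ∑ b ∈ s with b = a, g (n b) := by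
        simp only [sum_filter, ← sum_add_distrib]
        refine sum_congr rfl fun b _ => ?_
        rcases lt_trichotomy b a with h | h | h
        · simp [h, h.not_gt, h.ne]
        · simp [h]
        · simp [h, h.not_gt, h.ne']
    _ ≤ 5 := by linarith

/-- For cells indexed by a linear order, with `l` recording their lengths: the number of cells
strictly between `a` and `b` that are at least as long as the shorter of these two. Only such cells
are counted, so that the points of `a` and `b` are at distance at least
`gapCount l a b * min (l a) (l b)`. -/
noncomputable def gapCount [Fintype α] (l : α → β) (a b : α) : ℕ :=
  #{c | min (l a) (l b) ≤ l c ∧ min a b < c ∧ c < max a b}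

lemma gapCount_comm [Fintype α] (l : α → β) (a b : α) : gapCount l a b = gapCount l b a := by
  simp only [gapCount, min_comm, max_comm]

lemma sum_sum_inv_gapCount_sq_le [Fintype α] (l : α → β) :
    ∑ a, ∑ b, (((gapCount l a b : ℝ) + 1) ^ 2)⁻¹ ≤ 10 * (Fintype.card α : ℝ) := by
  set g : α → α → ℝ := fun a b => (((gapCount l a b : ℝ) + 1) ^ 2)⁻¹ with hg
  have hlong (b : α) : ∑ a with l b ≤ l a, g a b ≤ 5 := by
    refine le_of_eq_of_le (sum_congr rfl fun a ha => ?_)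
      (sum_inv_succ_card_between_sq_le ({a | l b ≤ l a} : Finset α) b)
    simp only [hg, gapCount, min_eq_right (mem_filter.1 ha).2, filter_filter]
  have hlong' : ∑ b, ∑ a with l b ≤ l a, g a b ≤ 5 * (Fintype.card α : ℝ) :=
    (sum_le_sum fun b _ => hlong b).trans_eq (by simp [mul_comm])
  calc ∑ a, ∑ b, g a b
    _ ≤ ∑ a, ∑ b, ((if l b ≤ l a then g a b else 0) + if l a ≤ l b then g b a else 0) := by
        gcongr with a _ b _
        have : 0 ≤ g a b := by positivity
        have : g a b = g b a := by simp only [hg, gapCount_comm]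
        rcases le_total (l a) (l b) with h | h <;> simp only [h, if_true] <;> split_ifs <;> linarith
    _ = (∑ b, ∑ a with l b ≤ l a, g a b) + ∑ a, ∑ b with l a ≤ l b, g b a := by
        simp only [sum_add_distrib, sum_filter]
        rw [sum_comm]
    _ ≤ 10 * (Fintype.card α : ℝ) := by linarith

end Gap

section Partition

lemma exists_linearOrder_monotone {ι α : Type*} [Finite ι] [LinearOrder α] (μ : ι → α) :
    ∃ _ : LinearOrder ι, Monotone μ := by
  obtain ⟨n, ⟨e⟩⟩ := Finite.exists_equiv_fin ι
  have hinj : Function.Injective fun i => toLex (μ i, e i) := fun i j h =>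
    e.injective (Prod.ext_iff.1 (toLex_inj.1 h)).2
  exact ⟨LinearOrder.lift' _ hinj, fun i j h => Prod.Lex.monotone_fst _ _ h⟩

variable {ι : Type*} [Fintype ι]

lemma exists_monotone_sum_fiber_le [LinearOrder ι] {w : ι → ℝ} (hw : ∀ i, 0 ≤ w i) {δ : ℝ}
    (hδ : 0 < δ) (hwδ : ∀ i, w i ≤ δ) {N : ℕ} (hN : ∑ i, w i ≤ N * δ) :
    ∃ c : ι → Fin (N + 1), Monotone c ∧ ∀ r, ∑ i with c i = r, w i ≤ 2 * δ := by
  set F : ι → ℝ := fun i => ∑ j with j < i, w j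
  have hF (i : ι) : 0 ≤ F i := sum_nonneg fun j _ => hw j
  have hFmono : Monotone F := fun i j hij =>
    sum_le_sum_of_subset_of_nonneg (by grind) fun k _ _ => hw k
  have hc (i : ι) : ⌊F i / δ⌋₊ < N + 1 := by
    refine Nat.lt_succ_of_le (Nat.floor_le_of_le ((div_le_iff₀ hδ).2 (hN.trans' ?_)))
    exact sum_le_univ_sum_of_nonneg hw
  refine ⟨fun i => ⟨⌊F i / δ⌋₊, hc i⟩, fun i j hij => ?_, fun r => ?_⟩
  · exact Nat.floor_le_floor (by gcongr; exact hFmono hij)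
  set s : Finset ι := {i | (⟨⌊F i / δ⌋₊, hc i⟩ : Fin (N + 1)) = r}
  rcases s.eq_empty_or_nonempty with h | h
  · simp [h, hδ.le]
  obtain ⟨a, ha, hmin⟩ := s.exists_min_image id h
  obtain ⟨b, hb, hmax⟩ := s.exists_max_image id h
  have hFa : r * δ ≤ F a := by
    rw [← le_div_iff₀ hδ, ← (mem_filter.1 ha).2]
    exact Nat.floor_le (div_nonneg (hF a) hδ.le)
  have hFb : F b < (r + 1) * δ := by
    rw [← div_lt_iff₀ hδ, ← (mem_filter.1 hb).2]
    exact Nat.lt_floor_add_one _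
  have hsum : ∑ i ∈ s, w i + F a ≤ F b + w b := by
    have hdisj : Disjoint s ({j | j < a} : Finset ι) := by
      rw [disjoint_left]
      exact fun i hi hia => (hmin i hi).not_gt (mem_filter.1 hia).2
    have hb' : b ∉ ({j | j < b} : Finset ι) := by simp
    rw [← sum_union hdisj, add_comm (F b), ← sum_insert hb']
    refine sum_le_sum_of_subset_of_nonneg (fun i hi => ?_) fun k _ _ => hw k
    have := hmin b hb
    have := hmax
    grind
  linarith [hwδ b]

lemma exists_monovary_sum_fiber_le {α : Type*} [LinearOrder α] (μ : ι → α) {w : ι → ℝ}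
    (hw : ∀ i, 0 ≤ w i) {δ : ℝ} (hδ : 0 < δ) (hwδ : ∀ i, w i ≤ δ) {N : ℕ}
    (hN : ∑ i, w i ≤ N * δ) :
    ∃ c : ι → Fin (N + 1), Monovary μ c ∧ ∀ r, ∑ i with c i = r, w i ≤ 2 * δ := by
  obtain ⟨_, hμ⟩ := exists_linearOrder_monotone μ
  obtain ⟨c, hc, hcδ⟩ := exists_monotone_sum_fiber_le hw hδ hwδ hN
  exact ⟨c, hμ.monovary hc, hcδ⟩

end Partition

section CellDiam

variable {ι κ : Type*}

/-- The length of the `r`-th cell when the points `μ i` are grouped into cells by `c`. It is `0` for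
an empty cell. -/
noncomputable def cellDiam (μ : ι → ℝ) (c : ι → κ) (r : κ) : ℝ :=
  Metric.diam (μ '' (c ⁻¹' {r}))

lemma abs_sub_le_cellDiam [Finite ι] (μ : ι → ℝ) {c : ι → κ} {i j : ι} {r : κ} (hi : c i = r)
    (hj : c j = r) : |μ i - μ j| ≤ cellDiam μ c r :=
  Metric.dist_le_diam_of_mem (Set.toFinite _).isBounded (Set.mem_image_of_mem μ hi)
    (Set.mem_image_of_mem μ hj)

variable [LinearOrder κ]

lemma sum_cellDiam_le_sub {μ : ι → ℝ} {c : ι → κ} (h : Monovary μ c) {i j : ι}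
    (hij : c j < c i) {s : Finset κ} (hs : ∀ r ∈ s, c j < r ∧ r < c i) :
    ∑ r ∈ s, cellDiam μ c r ≤ μ i - μ j := by
  induction s using Finset.induction_on_max generalizing i with
  | empty => simpa using h hij
  | insert a s ha ih =>
    have hja : c j < a := (hs a (by simp)).1
    have hsum {k : ι} (hk : a ≤ c k) : ∑ r ∈ s, cellDiam μ c r ≤ μ k - μ j :=
      ih (hja.trans_le hk) fun r hr => ⟨(hs r (by simp [hr])).1, (ha r hr).trans_le hk⟩
    have hai : a < c i := (hs a (by simp)).2
    have hsub : μ '' (c ⁻¹' {a}) ⊆ Set.Icc (μ j + ∑ r ∈ s, cellDiam μ c r) (μ i) := by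
      rintro _ ⟨k, rfl, rfl⟩
      exact ⟨by linarith [hsum (le_refl (c k))], h hai⟩
    have hdiam : cellDiam μ c a ≤ μ i - (μ j + ∑ r ∈ s, cellDiam μ c r) :=
      (Metric.diam_mono hsub (Metric.isBounded_Icc _ _)).trans_eq
        (Real.diam_Icc (by linarith [hsum hai.le]))
    rw [sum_insert fun hmem => (ha a hmem).false]
    linarith

lemma gapCount_mul_min_cellDiam_le [Fintype κ] {μ : ι → ℝ} {c : ι → κ} (h : Monovary μ c)
    (i j : ι) :
    gapCount (cellDiam μ c) (c i) (c j) * min (cellDiam μ c (c i)) (cellDiam μ c (c j))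
      ≤ |μ i - μ j| := by
  wlog hij : c j ≤ c i generalizing i j
  · rw [gapCount_comm, min_comm, abs_sub_comm]
    exact this j i (le_of_not_ge hij)
  rw [gapCount, min_eq_right hij, max_eq_left hij, ← nsmul_eq_mul]
  refine (card_nsmul_le_sum _ (cellDiam μ c) _ fun r hr => (mem_filter.1 hr).2.1).trans ?_
  rcases hij.eq_or_lt with hij | hij
  · rw [filter_false_of_mem fun r _ hr => (hr.2.1.trans hr.2.2).ne hij, sum_empty]
    exact abs_nonneg _
  · exact (sum_cellDiam_le_sub h hij fun r hr => (mem_filter.1 hr).2.2).trans (le_abs_self _)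

end CellDiam

section Rank

variable {m n R : Type*} [Fintype n] [Field R]

lemma rank_add_le [Finite m] (A B : Matrix m n R) : (A + B).rank ≤ A.rank + B.rank := by
  have h : LinearMap.range (A + B).mulVecLin ≤
      LinearMap.range A.mulVecLin ⊔ LinearMap.range B.mulVecLin := by
    rw [Matrix.mulVecLin_add]
    exact LinearMap.range_add_le _ _
  exact (Submodule.finrank_mono h).trans (Submodule.finrank_add_le_finrank_add_finrank _ _)

lemma rank_sub_le [Finite m] (A B : Matrix m n R) : (A - B).rank ≤ A.rank + B.rank := by
  classical
  have h : A - B = A + B * (-1 : Matrix n n R) := by simp [sub_eq_add_neg]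
  rw [h]
  exact (rank_add_le _ _).trans (add_le_add_right (rank_mul_le_left _ _) _)

lemma rank_hadamard_vecMulVec_le [Finite m] (P : Matrix m n R) (a : m → R) (b : n → R) :
    (P ⊙ vecMulVec a b).rank ≤ P.rank := by
  classical
  have := Fintype.ofFinite m
  have h : P ⊙ vecMulVec a b = diagonal a * P * diagonal b := by
    ext i j
    simp only [hadamard_apply, vecMulVec_apply, mul_diagonal, diagonal_mul]
    ring
  rw [h]
  exact (rank_mul_le_left _ _).trans (rank_mul_le_right _ _)

lemma rank_le_card_add_card [Finite m] {A : Matrix m n R} {s : Finset m} {t : Finset n}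
    (h : ∀ i ∉ s, ∀ j ∉ t, A i j = 0) : A.rank ≤ #s + #t := by
  classical
  have := Fintype.ofFinite m
  let D : Matrix m m R := diagonal fun i => if i ∈ s then 1 else 0
  let D' : Matrix n n R := diagonal fun j => if j ∈ t then 1 else 0
  have hA : A = D * A + (A - D * A) * D' := by
    ext i j
    by_cases hi : i ∈ s <;> by_cases hj : j ∈ t <;> simp [D, D', hi, hj, h]
  have hD : D.rank = #s := by simp [D, rank_diagonal, Fintype.card_subtype]
  have hD' : D'.rank = #t := by simp [D', rank_diagonal, Fintype.card_subtype]
  rw [hA, ← hD, ← hD']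
  exact (rank_add_le _ _).trans (add_le_add (rank_mul_le_left _ _) (rank_mul_le_right _ _))

end Rank

section Loewner

variable {ι κ : Type*}

/-- The Löwner matrix of divided differences `(f (μ j) - f (μ i)) / (μ j - μ i)`. It is `0` where
`μ i = μ j`, which is harmless because `[diagonal μ, x]` vanishes there too. Schur multiplication
by it carries `[diagonal μ, x]` to `[diagonal (f ∘ μ), x]`. -/
noncomputable def loewnerMatrix (f : ℝ → ℝ) (μ : ι → ℝ) : Matrix ι ι ℂ :=
  of fun i j => (slope f (μ i) (μ j) : ℂ)

lemma exists_loewnerMatrix_approx [Fintype ι] [Fintype κ] [LinearOrder κ] {K : ℝ≥0}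
    {f : ℝ → ℝ} (hf : LipschitzWith K f) {μ : ι → ℝ} {c : ι → κ} (h : Monovary μ c) :
    ∃ P : Matrix ι ι ℂ, P.rank ≤ 2 * Fintype.card κ ∧ ∀ i j,
      ‖loewnerMatrix f μ i j - P i j‖ ≤ 4 * K / (gapCount (cellDiam μ c) (c i) (c j) + 1) := by
  set l := cellDiam μ c
  let p : κ → ℝ := Function.extend c μ 0
  have hp (i : ι) : |μ i - p (c i)| ≤ l (c i) := by
    have hc : ∃ k, c k = c i := ⟨i, rfl⟩
    rw [show p (c i) = μ hc.choose from dif_pos hc]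
    exact abs_sub_le_cellDiam μ rfl hc.choose_spec
  have hslope (i j : ι) (hij : l (c j) ≤ l (c i)) :
      |slope f (μ i) (μ j) - slope f (μ i) (p (c j))| ≤
        4 * K / (gapCount l (c i) (c j) + 1) := by
    refine abs_slope_sub_slope_le_of_separated hf _ (hp j) ?_
    rw [abs_sub_comm]
    simpa only [l, min_eq_right hij] using gapCount_mul_min_cellDiam_le h i j
  -- Moving the point in the shorter of the two cells to the marked point `p` of that cell makes the
  -- divided difference depend on it only through the cell: this is where low rank comes from.
  let Q : Matrix ι κ ℂ := of fun i r => if l r ≤ l (c i) then (slope f (μ i) (p r) : ℂ) else 0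
  let Q' : Matrix κ ι ℂ := of fun r j => if l (c j) ≤ l r then 0 else (slope f (p r) (μ j) : ℂ)
  refine ⟨Q.submatrix id c + Q'.submatrix c id, ?_, fun i j => ?_⟩
  · calc (Q.submatrix id c + Q'.submatrix c id).rank
      _ ≤ Q.rank + Q'.rank :=
        (rank_add_le _ _).trans (add_le_add (rank_submatrix_le ..) (rank_submatrix_le ..))
      _ ≤ 2 * Fintype.card κ := by
        linarith [Q.rank_le_card_width, Q'.rank_le_card_height]
  · by_cases hij : l (c j) ≤ l (c i)
    · simpa [Q, Q', loewnerMatrix, hij, ← Complex.ofReal_sub] using hslope i j hij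
    · simpa [Q, Q', loewnerMatrix, hij, ← Complex.ofReal_sub, gapCount_comm,
        slope_comm f (μ i), slope_comm f (p _)]
        using hslope j i (le_of_not_ge hij)

end Loewner

section Approximation

open scoped Matrix.Norms.Frobenius

lemma frobenius_norm_sq {m n α : Type*} [Fintype m] [Fintype n] [NormedAddCommGroup α]
    (A : Matrix m n α) : ‖A‖ ^ 2 = ∑ i, ∑ j, ‖A i j‖ ^ 2 := by
  rw [frobenius_norm_def, ← Real.sqrt_eq_rpow, Real.sq_sqrt (by positivity)]
  simp

variable {ι κ : Type*} [Fintype ι]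

lemma sum_sum_mul_mul_le_of_sum_fiber_le [Fintype κ] [DecidableEq κ] {c : ι → κ}
    {E : κ → κ → ℝ} {u v : ι → ℝ} {t : ℝ} (hE : ∀ p q, 0 ≤ E p q)
    (hu : ∀ i, 0 ≤ u i) (hv : ∀ i, 0 ≤ v i) (hut : ∀ r, ∑ i with c i = r, u i ≤ t)
    (hvt : ∀ r, ∑ i with c i = r, v i ≤ t) :
    ∑ i, ∑ j, E (c i) (c j) * (u i * v j) ≤ t ^ 2 * ∑ p, ∑ q, E p q := by
  calc ∑ i, ∑ j, E (c i) (c j) * (u i * v j)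
    _ = ∑ p, ∑ q, E p q * ((∑ i with c i = p, u i) * ∑ j with c j = q, v j) := by
      rw [← sum_fiberwise univ c]
      refine sum_congr rfl fun p _ => ?_
      simp_rw [← sum_fiberwise univ c (fun j => E _ (c j) * _)]
      rw [sum_comm]
      refine sum_congr rfl fun q _ => ?_
      rw [sum_mul_sum, mul_sum]
      refine sum_congr rfl fun i hi => ?_
      rw [mul_sum]
      refine sum_congr rfl fun j hj => ?_
      rw [(mem_filter.1 hi).2, (mem_filter.1 hj).2]
    _ ≤ ∑ p, ∑ q, E p q * (t * t) := by
      gcongr with p _ q _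
      · exact hE p q
      · exact sum_nonneg fun j _ => hv j
      · exact (sum_nonneg fun i _ => hu i).trans (hut p)
      · exact hut p
      · exact hvt q
    _ = t ^ 2 * ∑ p, ∑ q, E p q := by
      simp_rw [← sum_mul]
      ring

variable {K : ℝ≥0} {f : ℝ → ℝ}

lemma norm_loewnerMatrix_hadamard_vecMulVec_le (hf : LipschitzWith K f) (μ : ι → ℝ)
    {a b : ι → ℂ} (ha : ∑ i, ‖a i‖ ^ 2 ≤ 1) (hb : ∑ i, ‖b i‖ ^ 2 ≤ 1) :
    ‖loewnerMatrix f μ ⊙ vecMulVec a b‖ ≤ K := by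
  rw [← sq_le_sq₀ (norm_nonneg _) K.coe_nonneg, frobenius_norm_sq]
  calc ∑ i, ∑ j, ‖(loewnerMatrix f μ ⊙ vecMulVec a b) i j‖ ^ 2
    _ ≤ ∑ i, ∑ j, (K : ℝ) ^ 2 * (‖a i‖ ^ 2 * ‖b j‖ ^ 2) := by
      gcongr with i _ j _
      rw [hadamard_apply, vecMulVec_apply, norm_mul, norm_mul, mul_pow, mul_pow]
      gcongr
      simpa [loewnerMatrix] using abs_slope_le_of_lipschitzWith hf (μ i) (μ j)
    _ = (K : ℝ) ^ 2 * ((∑ i, ‖a i‖ ^ 2) * ∑ j, ‖b j‖ ^ 2) := by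
      simp_rw [← mul_sum, ← sum_mul]
    _ ≤ (K : ℝ) ^ 2 * 1 := by
      gcongr
      exact mul_le_one₀ ha (by positivity) hb
    _ = (K : ℝ) ^ 2 := mul_one _

lemma exists_approx_loewnerMatrix_hadamard_vecMulVec_of_le (hf : LipschitzWith K f) (μ : ι → ℝ)
    {a b : ι → ℂ} {δ : ℝ} (hδ : 0 < δ) (habδ : ∀ i, ‖a i‖ ^ 2 + ‖b i‖ ^ 2 ≤ δ) {N : ℕ}
    (hN : ∑ i, (‖a i‖ ^ 2 + ‖b i‖ ^ 2) ≤ N * δ) :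
    ∃ R : Matrix ι ι ℂ, R.rank ≤ 2 * (N + 1) ∧
      ‖loewnerMatrix f μ ⊙ vecMulVec a b - R‖ ^ 2 ≤ 640 * K ^ 2 * (N + 1) * δ ^ 2 := by
  obtain ⟨c, hc, hcδ⟩ := exists_monovary_sum_fiber_le μ (fun i => by positivity) hδ habδ hN
  obtain ⟨P, hPrank, hP⟩ := exists_loewnerMatrix_approx hf hc
  set E : Fin (N + 1) → Fin (N + 1) → ℝ := fun p q =>
    16 * (K : ℝ) ^ 2 * (((gapCount (cellDiam μ c) p q : ℝ) + 1) ^ 2)⁻¹ with hE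
  have hEsum : ∑ p, ∑ q, E p q ≤ 160 * K ^ 2 * (N + 1) := by
    have h := sum_sum_inv_gapCount_sq_le (cellDiam μ c)
    rw [Fintype.card_fin] at h
    push_cast at h
    simp_rw [hE, ← mul_sum]
    linarith [mul_le_mul_of_nonneg_left h (by positivity : 0 ≤ 16 * (K : ℝ) ^ 2)]
  refine ⟨P ⊙ vecMulVec a b, ?_, ?_⟩
  · exact (rank_hadamard_vecMulVec_le P a b).trans (by simpa using hPrank)
  calc ‖loewnerMatrix f μ ⊙ vecMulVec a b - P ⊙ vecMulVec a b‖ ^ 2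
    _ = ∑ i, ∑ j, ‖loewnerMatrix f μ i j - P i j‖ ^ 2 * (‖a i‖ ^ 2 * ‖b j‖ ^ 2) := by
      simp_rw [frobenius_norm_sq, Matrix.sub_apply, hadamard_apply, vecMulVec_apply, ← sub_mul,
        norm_mul, mul_pow]
    _ ≤ ∑ i, ∑ j, E (c i) (c j) * (‖a i‖ ^ 2 * ‖b j‖ ^ 2) := by
      gcongr with i _ j _
      refine (pow_le_pow_left₀ (norm_nonneg _) (hP i j) 2).trans_eq ?_
      rw [hE, div_pow, mul_pow, div_eq_mul_inv]
      norm_num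
    _ ≤ (2 * δ) ^ 2 * ∑ p, ∑ q, E p q := by
      refine sum_sum_mul_mul_le_of_sum_fiber_le (fun p q => by positivity) (fun i => sq_nonneg _)
        (fun i => sq_nonneg _) (fun r => ?_) fun r => ?_
      · exact (sum_le_sum fun i _ => le_add_of_nonneg_right (sq_nonneg _)).trans (hcδ r)
      · exact (sum_le_sum fun i _ => le_add_of_nonneg_left (sq_nonneg _)).trans (hcδ r)
    _ ≤ (2 * δ) ^ 2 * (160 * K ^ 2 * (N + 1)) := by gcongr
    _ = 640 * K ^ 2 * (N + 1) * δ ^ 2 := by ring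

lemma card_filter_lt_le {ι : Type*} {s : Finset ι} {w : ι → ℝ} (hw : ∀ i ∈ s, 0 ≤ w i) {δ : ℝ}
    (hδ : 0 < δ) {N : ℕ} (hN : ∑ i ∈ s, w i ≤ N * δ) : #{i ∈ s | δ < w i} ≤ N := by
  suffices h : (#{i ∈ s | δ < w i} : ℝ) * δ ≤ N * δ from
    Nat.cast_le.1 (le_of_mul_le_mul_right h hδ)
  rw [← nsmul_eq_mul]
  exact (card_nsmul_le_sum _ w _ fun i hi => (mem_filter.1 hi).2.le).trans
    ((sum_le_sum_of_subset_of_nonneg (filter_subset _ _) fun i hi _ => hw i hi).trans hN)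

lemma exists_approx_loewnerMatrix_hadamard_vecMulVec (hf : LipschitzWith K f) (μ : ι → ℝ)
    {a b : ι → ℂ} (ha : ∑ i, ‖a i‖ ^ 2 ≤ 1) (hb : ∑ i, ‖b i‖ ^ 2 ≤ 1) {N : ℕ} (hN : 0 < N) :
    ∃ R : Matrix ι ι ℂ, R.rank ≤ 10 * N ∧
      ‖loewnerMatrix f μ ⊙ vecMulVec a b - R‖ ^ 2 ≤ 1920 * K ^ 2 / N := by
  classical
  have hN' : (1 : ℝ) ≤ N := by exact_mod_cast hN
  have hδ : 0 < (N : ℝ)⁻¹ := by positivity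
  set w : ι → ℝ := fun i => ‖a i‖ ^ 2 + ‖b i‖ ^ 2
  have hw (i : ι) : 0 ≤ w i := by positivity
  have hsum : ∑ i, w i ≤ (2 * N : ℕ) * (N : ℝ)⁻¹ := by
    rw [Nat.cast_mul, mul_assoc, mul_inv_cancel₀ (by positivity), sum_add_distrib]
    push_cast
    linarith
  let heavy : Finset ι := {i | (N : ℝ)⁻¹ < w i}
  have hheavy : #heavy ≤ 2 * N := card_filter_lt_le (fun i _ => hw i) hδ hsum
  let a' : ι → ℂ := fun i => if i ∈ heavy then 0 else a i
  let b' : ι → ℂ := fun i => if i ∈ heavy then 0 else b i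
  have hlight (i : ι) :
      ‖a' i‖ ^ 2 + ‖b' i‖ ^ 2 ≤ w i ∧ ‖a' i‖ ^ 2 + ‖b' i‖ ^ 2 ≤ (N : ℝ)⁻¹ := by
    by_cases hi : i ∈ heavy
    · simpa [a', b', hi] using hw i
    · have hwi : w i ≤ (N : ℝ)⁻¹ := by simpa [heavy] using hi
      simp only [a', b', if_neg hi]
      exact ⟨le_rfl, hwi⟩
  obtain ⟨R, hRrank, hR⟩ := exists_approx_loewnerMatrix_hadamard_vecMulVec_of_le hf μ hδ
    (fun i => (hlight i).2) ((sum_le_sum fun i _ => (hlight i).1).trans hsum)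
  set D := loewnerMatrix f μ ⊙ vecMulVec a b - loewnerMatrix f μ ⊙ vecMulVec a' b'
  have hD : D.rank ≤ #heavy + #heavy :=
    rank_le_card_add_card fun i hi j hj => by
      simp [D, a', b', hi, hj, vecMulVec_apply]
  refine ⟨D + R, ?_, ?_⟩
  · have := rank_add_le D R
    omega
  · rw [← sub_sub, sub_sub_cancel]
    refine hR.trans ?_
    rw [inv_pow, ← div_eq_mul_inv, div_le_div_iff₀ (by positivity) (by positivity)]
    push_cast
    have : 0 ≤ (K : ℝ) ^ 2 * N * (N - 1) := mul_nonneg (by positivity) (sub_nonneg.2 hN')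
    linarith

lemma exists_approx_loewnerMatrix_hadamard_vecMulVec_four_pow (hf : LipschitzWith K f) (μ : ι → ℝ)
    {a b : ι → ℂ} (ha : ∑ i, ‖a i‖ ^ 2 ≤ 1) (hb : ∑ i, ‖b i‖ ^ 2 ≤ 1) (n : ℕ) :
    ∃ R : Matrix ι ι ℂ, R.rank ≤ 10 * 4 ^ n ∧
      ‖loewnerMatrix f μ ⊙ vecMulVec a b - R‖ ≤ 44 * K / 2 ^ n := by
  obtain ⟨R, hRrank, hR⟩ :=
    exists_approx_loewnerMatrix_hadamard_vecMulVec hf μ ha hb (N := 4 ^ n) (by positivity)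
  refine ⟨R, hRrank, ?_⟩
  rw [← sq_le_sq₀ (norm_nonneg _) (by positivity)]
  calc ‖loewnerMatrix f μ ⊙ vecMulVec a b - R‖ ^ 2
    _ ≤ 1920 * K ^ 2 / 4 ^ n := by exact_mod_cast hR
    _ ≤ 1936 * K ^ 2 / 4 ^ n := by gcongr; norm_num
    _ = (44 * K / 2 ^ n) ^ 2 := by rw [div_pow, ← pow_mul, mul_comm n, pow_mul]; ring_nf

end Approximation

section ColumnNorms

open scoped ComplexOrder MatrixOrder

variable {m n : Type*} [Fintype m]

lemma conjTranspose_mul_self_apply_self (A : Matrix m n ℂ) (j : n) :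
    (Aᴴ * A) j j = ((∑ i, ‖A i j‖ ^ 2 : ℝ) : ℂ) := by
  rw [mul_apply]
  push_cast
  exact sum_congr rfl fun i _ => RCLike.conj_mul (A i j)

lemma sum_norm_sq_col_le_one [DecidableEq n] {A : Matrix m n ℂ} (hA : Aᴴ * A ≤ 1) (j : n) :
    ∑ i, ‖A i j‖ ^ 2 ≤ 1 := by
  have h := (Matrix.le_iff.1 hA).diag_nonneg (i := j)
  rw [Matrix.sub_apply, one_apply_eq, conjTranspose_mul_self_apply_self, sub_nonneg] at h
  exact_mod_cast h

lemma norm_conjTranspose_mul_apply_le_one {o : Type*} [DecidableEq n] [DecidableEq o]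
    {A : Matrix m n ℂ} {B : Matrix m o ℂ} (hA : Aᴴ * A ≤ 1) (hB : Bᴴ * B ≤ 1) (i : n) (j : o) :
    ‖(Aᴴ * B) i j‖ ≤ 1 := by
  rw [← sq_le_one_iff₀ (norm_nonneg _)]
  calc ‖(Aᴴ * B) i j‖ ^ 2
    _ ≤ (∑ k, ‖A k i‖ * ‖B k j‖) ^ 2 := by
      rw [mul_apply]
      gcongr
      exact (norm_sum_le _ _).trans_eq (by simp)
    _ ≤ (∑ k, ‖A k i‖ ^ 2) * ∑ k, ‖B k j‖ ^ 2 := sum_mul_sq_le_sq_mul_sq _ _ _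
    _ ≤ 1 := mul_le_one₀ (sum_norm_sq_col_le_one hA i) (by positivity) (sum_norm_sq_col_le_one hB j)

lemma conjTranspose_mul_self_mul_le_one {n : Type*} [Fintype n] [DecidableEq n] {X : Matrix m n ℂ}
    {V : Matrix n n ℂ} (hX : Xᴴ * X ≤ 1) (hV : Vᴴ * V = 1) : (X * V)ᴴ * (X * V) ≤ 1 := by
  have h := star_left_conjugate_le_conjugate hX V
  rw [star_eq_conjTranspose, Matrix.mul_one, hV] at h
  simpa only [conjTranspose_mul, Matrix.mul_assoc] using h

lemma diagonal_le_one {n : Type*} [Finite n] [DecidableEq n] {a : n → ℂ} (h : ∀ i, a i ≤ 1) :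
    diagonal a ≤ 1 := by
  have := Fintype.ofFinite n
  rw [Matrix.le_iff, ← diagonal_one, diagonal_sub, posSemidef_diagonal_iff]
  exact fun i => sub_nonneg.2 (h i)

end ColumnNorms

section Trace

open scoped Matrix.Norms.Frobenius

variable {m n : Type*} [Fintype m] [Fintype n]

lemma trace_conjTranspose_mul_self_eq_norm_sq (A : Matrix m n ℂ) :
    (Aᴴ * A).trace = ((‖A‖ ^ 2 : ℝ) : ℂ) := by
  rw [frobenius_norm_sq, sum_comm, Complex.ofReal_sum]
  exact sum_congr rfl fun j _ => conjTranspose_mul_self_apply_self A j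

lemma norm_trace_conjTranspose_mul_le (A B : Matrix m n ℂ) :
    ‖(Aᴴ * B).trace‖ ≤ ‖A‖ * ‖B‖ := by
  have h : ‖(Aᴴ * B).trace‖ ≤ ∑ j, ∑ i, ‖A i j‖ * ‖B i j‖ := by
    refine (norm_sum_le _ _).trans (sum_le_sum fun j _ => ?_)
    rw [diag_apply, mul_apply]
    exact (norm_sum_le _ _).trans_eq (by simp)
  refine h.trans (le_of_sq_le_sq ?_ (by positivity))
  rw [mul_pow, frobenius_norm_sq, frobenius_norm_sq, sum_comm]
  simp_rw [← sum_product']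
  exact sum_mul_sq_le_sq_mul_sq _ _ _

end Trace

section SingularValues

variable {d : ℕ} (M : Matrix (Fin d) (Fin d) ℂ)

lemma singularValues_nonneg (i : Fin d) : 0 ≤ singularValues M i := Real.sqrt_nonneg _

lemma singularValues_sq (i : Fin d) :
    singularValues M i ^ 2 = (isHermitian_conjTranspose_mul_self M).eigenvalues i :=
  Real.sq_sqrt (eigenvalues_conjTranspose_mul_self_nonneg M i)

variable {M} in
lemma singularValues_conjTranspose_mul_mul {U : Matrix (Fin d) (Fin d) ℂ} (hU : U * Uᴴ = 1) :
    singularValues (Uᴴ * M * U) = singularValues M := by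
  have hgram : (Uᴴ * M * U)ᴴ * (Uᴴ * M * U) = Uᴴ * (Mᴴ * M * U) := by
    simp only [conjTranspose_mul, conjTranspose_conjTranspose, Matrix.mul_assoc]
    rw [← Matrix.mul_assoc U, hU, Matrix.one_mul]
  have hchar : ((Uᴴ * M * U)ᴴ * (Uᴴ * M * U)).charpoly = (Mᴴ * M).charpoly := by
    rw [hgram, charpoly_mul_comm, Matrix.mul_assoc, hU, Matrix.mul_one]
  have heig := (IsHermitian.eigenvalues_eq_eigenvalues_iff
    (isHermitian_conjTranspose_mul_self _) (isHermitian_conjTranspose_mul_self M)).2 hchar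
  funext i
  exact congrArg Real.sqrt (congr_fun heig i)

lemma exists_conjTranspose_mul_self_eq_diagonal :
    ∃ V : Matrix (Fin d) (Fin d) ℂ, V ∈ unitaryGroup (Fin d) ℂ ∧
      (M * V)ᴴ * (M * V) = diagonal fun i => ((singularValues M i ^ 2 : ℝ) : ℂ) := by
  set hM := isHermitian_conjTranspose_mul_self M
  refine ⟨hM.eigenvectorUnitary, hM.eigenvectorUnitary.2, ?_⟩
  have h := hM.conjStarAlgAut_star_eigenvectorUnitary
  rw [Unitary.conjStarAlgAut_star_apply, star_eq_conjTranspose] at h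
  rw [conjTranspose_mul, Matrix.mul_assoc, ← Matrix.mul_assoc Mᴴ, ← Matrix.mul_assoc, h]
  simp_rw [singularValues_sq]
  rfl

lemma exists_svd :
    ∃ W V : Matrix (Fin d) (Fin d) ℂ, V ∈ unitaryGroup (Fin d) ℂ ∧
      (Wᴴ * W = diagonal fun i => if singularValues M i = 0 then 0 else 1) ∧
      M = W * diagonal (fun i => (singularValues M i : ℂ)) * Vᴴ := by
  obtain ⟨V, hV, hMV⟩ := exists_conjTranspose_mul_self_eq_diagonal M
  set s := singularValues M
  have hzero (i k : Fin d) (hk : s k = 0) : (M * V) i k = 0 := by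
    have h := congr_fun₂ hMV k k
    rw [conjTranspose_mul_self_apply_self, diagonal_apply_eq, Complex.ofReal_inj, hk] at h
    have hsum : ∑ i, ‖(M * V) i k‖ ^ 2 = 0 := h.trans (zero_pow two_ne_zero)
    simpa using (sum_eq_zero_iff_of_nonneg fun i _ => by positivity).1 hsum i (mem_univ i)
  refine ⟨M * V * diagonal fun i => ((s i : ℂ))⁻¹, V, hV, ?_, ?_⟩
  · rw [conjTranspose_mul, Matrix.mul_assoc, ← Matrix.mul_assoc _ (M * V), hMV,
      diagonal_conjTranspose, diagonal_mul_diagonal, diagonal_mul_diagonal]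
    congr 1
    funext k
    by_cases hk : s k = 0
    · simp [hk]
    · simp [hk, sq]
  · have h : M * V * (diagonal fun i => ((s i : ℂ))⁻¹) * diagonal (fun i => (s i : ℂ)) = M * V := by
      ext i k
      by_cases hk : s k = 0
      · simp [mul_diagonal, hk, hzero]
      · simp [mul_diagonal, hk]
    rw [h, Matrix.mul_assoc, ← star_eq_conjTranspose, mem_unitaryGroup_iff.1 hV, Matrix.mul_one]

section

open scoped Matrix.Norms.Frobenius

lemma sum_singularValues_sq : ∑ i, singularValues M i ^ 2 = ‖M‖ ^ 2 := by
  have h := (isHermitian_conjTranspose_mul_self M).trace_eq_sum_eigenvalues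
  rw [trace_conjTranspose_mul_self_eq_norm_sq] at h
  simp_rw [singularValues_sq]
  apply Complex.ofReal_injective
  rw [h, Complex.ofReal_sum]
  rfl

lemma card_singularValues_ne_zero : #{i | singularValues M i ≠ 0} = M.rank := by
  have h : M.rank = (Mᴴ * M).rank := by
    open scoped ComplexOrder in exact (rank_conjTranspose_mul_self M).symm
  rw [h, (isHermitian_conjTranspose_mul_self M).rank_eq_card_non_zero_eigs, Fintype.card_subtype]
  simp_rw [← singularValues_sq, ne_eq, sq_eq_zero_iff]

lemma sum_singularValues_sq_le : (∑ i, singularValues M i) ^ 2 ≤ M.rank * ‖M‖ ^ 2 := by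
  rw [← sum_filter_ne_zero, ← card_singularValues_ne_zero, ← sum_singularValues_sq]
  refine sq_sum_le_card_mul_sum_sq.trans ?_
  gcongr
  exact filter_subset _ _

end

section

open scoped ComplexOrder MatrixOrder

variable {M} in
lemma norm_trace_conjTranspose_mul_le_sum_singularValues {X : Matrix (Fin d) (Fin d) ℂ}
    (hX : Xᴴ * X ≤ 1) : ‖(Xᴴ * M).trace‖ ≤ ∑ i, singularValues M i := by
  obtain ⟨W, V, hV, hW, hM⟩ := exists_svd M
  have hWle : Wᴴ * W ≤ 1 := by
    rw [hW]
    exact diagonal_le_one fun i => by split_ifs <;> simp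
  have hXV := conjTranspose_mul_self_mul_le_one hX (mem_unitaryGroup_iff'.1 hV)
  have htrace : (Xᴴ * M).trace = ∑ i, ((X * V)ᴴ * W) i i * singularValues M i := by
    nth_rw 1 [hM]
    rw [← Matrix.mul_assoc, trace_mul_comm, ← Matrix.mul_assoc, ← Matrix.mul_assoc,
      ← conjTranspose_mul]
    simp [trace, mul_diagonal]
  rw [htrace]
  refine (norm_sum_le _ _).trans (sum_le_sum fun i _ => ?_)
  rw [norm_mul, Complex.norm_real, Real.norm_of_nonneg (singularValues_nonneg M i)]
  exact mul_le_of_le_one_left (singularValues_nonneg M i)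
    (norm_conjTranspose_mul_apply_le_one hXV hWle i i)

open scoped Matrix.Norms.Frobenius in
lemma exists_trace_eq_sum_singularValues (S : Finset (Fin d)) :
    ∃ X : Matrix (Fin d) (Fin d) ℂ, Xᴴ * X ≤ 1 ∧ ‖X‖ ^ 2 ≤ #S ∧
      (Xᴴ * M).trace = ((∑ i ∈ S, singularValues M i : ℝ) : ℂ) := by
  obtain ⟨W, V, hV, hW, hM⟩ := exists_svd M
  set s := singularValues M
  let D : Matrix (Fin d) (Fin d) ℂ := diagonal fun i => if i ∈ S ∧ s i ≠ 0 then 1 else 0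
  have hDW : Dᴴ * (Wᴴ * W) = D := by
    rw [hW, diagonal_conjTranspose, diagonal_mul_diagonal]
    congr 1
    funext i
    by_cases hi : i ∈ S <;> by_cases h : s i = 0 <;> simp [hi, h]
  have hDD : D * D = D := by simp [D, diagonal_mul_diagonal]
  have hmul (B : Matrix (Fin d) (Fin d) ℂ) :
      (W * D * Vᴴ)ᴴ * (W * B * Vᴴ) = V * (D * B) * Vᴴ := by
    conv_rhs => rw [← hDW]
    simp only [conjTranspose_mul, conjTranspose_conjTranspose, Matrix.mul_assoc]
  have htrace (B : Matrix (Fin d) (Fin d) ℂ) : (V * B * Vᴴ).trace = B.trace := by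
    rw [trace_mul_comm, ← Matrix.mul_assoc, ← star_eq_conjTranspose, mem_unitaryGroup_iff'.1 hV,
      Matrix.one_mul]
  refine ⟨W * D * Vᴴ, ?_, ?_, ?_⟩
  · have hD : D ≤ 1 := diagonal_le_one fun i => by split_ifs <;> simp
    have h := star_right_conjugate_le_conjugate hD V
    rwa [star_eq_conjTranspose, Matrix.mul_one, ← star_eq_conjTranspose,
      mem_unitaryGroup_iff.1 hV, star_eq_conjTranspose, ← hDD, ← hmul] at h
  · have h := trace_conjTranspose_mul_self_eq_norm_sq (W * D * Vᴴ)
    rw [hmul, hDD, htrace, trace_diagonal, sum_boole] at h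
    have hcard : (#{i | i ∈ S ∧ s i ≠ 0} : ℝ) = ‖W * D * Vᴴ‖ ^ 2 := by exact_mod_cast h
    have hsub : ({i | i ∈ S ∧ s i ≠ 0} : Finset (Fin d)) ⊆ S := fun i hi => (mem_filter.1 hi).2.1
    rw [← hcard]
    exact_mod_cast card_le_card hsub
  · conv_lhs => rw [hM]
    rw [hmul, htrace, diagonal_mul_diagonal, trace_diagonal, Complex.ofReal_sum,
      ← sum_subset S.subset_univ fun i _ hi => by simp [hi]]
    refine sum_congr rfl fun i hi => ?_
    by_cases h : s i = 0 <;> simp [hi, h]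

end

end SingularValues

section Chaining

lemma exists_le_four_pow_and_add_one_le_log {k : ℕ} (hk : 0 < k) :
    ∃ n : ℕ, k ≤ 4 ^ n ∧ (n + 1 : ℝ) ≤ 4 * Real.log (1 + k) := by
  set m := Nat.log 4 k
  refine ⟨m + 1, (Nat.lt_pow_succ_log_self (by norm_num) k).le, ?_⟩
  have hpow : (2 : ℝ) ^ (m + 2) ≤ (1 + k) ^ 2 := by
    have hm : (4 : ℝ) ^ m ≤ k := by exact_mod_cast Nat.pow_log_le_self 4 hk.ne'
    calc (2 : ℝ) ^ (m + 2) = 4 * 2 ^ m := by ring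
      _ ≤ 4 * 4 ^ m := by gcongr; norm_num
      _ ≤ 4 * k := by gcongr
      _ ≤ (1 + k) ^ 2 := by linarith [sq_nonneg ((k : ℝ) - 1)]
  have hlog : (m + 2) * Real.log 2 ≤ 2 * Real.log (1 + k) := by
    simpa only [Real.log_pow, Nat.cast_add, Nat.cast_ofNat] using
      Real.log_le_log (by positivity) hpow
  have htwo : (m + 2) * (1 / 2) ≤ (m + 2) * Real.log 2 := by
    gcongr
    linarith [Real.log_two_gt_d9]
  push_cast
  linarith

open scoped ComplexOrder MatrixOrder Matrix.Norms.Frobenius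

variable {d : ℕ} {X T : Matrix (Fin d) (Fin d) ℂ} {c : ℝ} {r : ℕ}

lemma norm_trace_conjTranspose_mul_le_sqrt_mul (hX : Xᴴ * X ≤ 1) (hT : T.rank ≤ r) :
    ‖(Xᴴ * T).trace‖ ≤ √r * ‖T‖ := by
  refine (norm_trace_conjTranspose_mul_le_sum_singularValues hX).trans
    (le_of_sq_le_sq ?_ (by positivity))
  rw [mul_pow, Real.sq_sqrt (by positivity)]
  refine (sum_singularValues_sq_le T).trans ?_
  gcongr

lemma norm_trace_conjTranspose_mul_le_of_approx_succ (hX : Xᴴ * X ≤ 1) {n : ℕ}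
    {R R' : Matrix (Fin d) (Fin d) ℂ} (hr : R.rank ≤ r * 4 ^ n) (hr' : R'.rank ≤ r * 4 ^ (n + 1))
    (hR : ‖T - R‖ ≤ c / 2 ^ n) (hR' : ‖T - R'‖ ≤ c / 2 ^ (n + 1)) :
    ‖(Xᴴ * (R' - R)).trace‖ ≤ 4 * √r * c := by
  have hrank : (R' - R).rank ≤ (r * 4 ^ n) * 5 := by
    have := rank_sub_le R' R
    have : r * 4 ^ (n + 1) = r * 4 ^ n * 4 := by ring
    omega
  have hnorm : ‖R' - R‖ ≤ c / 2 ^ n * (3 / 2) :=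
    calc ‖R' - R‖ = ‖(T - R) - (T - R')‖ := by rw [sub_sub_sub_cancel_left]
      _ ≤ c / 2 ^ n + c / 2 ^ (n + 1) := (norm_sub_le _ _).trans (add_le_add hR hR')
      _ = c / 2 ^ n * (3 / 2) := by field_simp; ring
  have hsqrt : √(((r * 4 ^ n * 5 : ℕ) : ℝ)) ≤ √r * 2 ^ n * (8 / 3) := by
    rw [Real.sqrt_le_left (by positivity), mul_pow, mul_pow, Real.sq_sqrt (by positivity),
      ← pow_mul, mul_comm n, pow_mul]
    push_cast
    gcongr <;> norm_num
  calc ‖(Xᴴ * (R' - R)).trace‖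
    _ ≤ √((r * 4 ^ n * 5 : ℕ) : ℝ) * ‖R' - R‖ := norm_trace_conjTranspose_mul_le_sqrt_mul hX hrank
    _ ≤ (√r * 2 ^ n * (8 / 3)) * (c / 2 ^ n * (3 / 2)) := by gcongr
    _ = 4 * √r * c := by field_simp; ring

lemma norm_trace_conjTranspose_mul_le_of_approx (hX : Xᴴ * X ≤ 1) (hT : ‖T‖ ≤ c)
    {R : ℕ → Matrix (Fin d) (Fin d) ℂ} (hrank : ∀ n, (R n).rank ≤ r * 4 ^ n)
    (hR : ∀ n, ‖T - R n‖ ≤ c / 2 ^ n) (n : ℕ) :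
    ‖(Xᴴ * R n).trace‖ ≤ 4 * √r * c * (n + 1) := by
  induction n with
  | zero =>
    have hc : 0 ≤ c := (norm_nonneg T).trans hT
    have h : ‖R 0‖ ≤ 4 * c := by
      have := norm_le_norm_add_norm_sub' (R 0) T
      have := hR 0
      rw [norm_sub_rev] at this
      linarith
    calc ‖(Xᴴ * R 0).trace‖
      _ ≤ √r * ‖R 0‖ := norm_trace_conjTranspose_mul_le_sqrt_mul hX (by simpa using hrank 0)
      _ ≤ √r * (4 * c) := by gcongr
      _ = 4 * √r * c * ((0 : ℕ) + 1) := by push_cast; ring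
  | succ n ih =>
    have hstep := norm_trace_conjTranspose_mul_le_of_approx_succ hX (hrank n) (hrank (n + 1))
      (hR n) (hR (n + 1))
    rw [← add_sub_cancel (R n) (R (n + 1)), Matrix.mul_add, trace_add]
    refine (norm_add_le_of_le ih hstep).trans_eq ?_
    push_cast
    ring

lemma norm_trace_conjTranspose_mul_le_log (hX : Xᴴ * X ≤ 1) {k : ℕ} (hk : 0 < k)
    (hXk : ‖X‖ ^ 2 ≤ k) (hT : ‖T‖ ≤ c)
    (happrox : ∀ n, ∃ R : Matrix (Fin d) (Fin d) ℂ, R.rank ≤ r * 4 ^ n ∧ ‖T - R‖ ≤ c / 2 ^ n) :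
    ‖(Xᴴ * T).trace‖ ≤ (16 * √r + 4) * c * Real.log (1 + k) := by
  choose R hrank hR using happrox
  obtain ⟨n, hkn, hn⟩ := exists_le_four_pow_and_add_one_le_log hk
  have hc : 0 ≤ c := (norm_nonneg T).trans hT
  have hXn : ‖X‖ ≤ 2 ^ n := by
    refine le_of_sq_le_sq ?_ (by positivity)
    calc ‖X‖ ^ 2 ≤ k := hXk
      _ ≤ (4 : ℝ) ^ n := by exact_mod_cast hkn
      _ = (2 ^ n) ^ 2 := by rw [← pow_mul, mul_comm, pow_mul]; norm_num
  have htail : ‖(Xᴴ * (T - R n)).trace‖ ≤ c :=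
    calc ‖(Xᴴ * (T - R n)).trace‖ ≤ ‖X‖ * ‖T - R n‖ := norm_trace_conjTranspose_mul_le _ _
      _ ≤ 2 ^ n * (c / 2 ^ n) := mul_le_mul hXn (hR n) (norm_nonneg _) (by positivity)
      _ = c := by field_simp
  calc ‖(Xᴴ * T).trace‖
    _ = ‖(Xᴴ * R n).trace + (Xᴴ * (T - R n)).trace‖ := by
      rw [← trace_add, ← Matrix.mul_add, add_sub_cancel]
    _ ≤ 4 * √r * c * (n + 1) + c :=
      norm_add_le_of_le (norm_trace_conjTranspose_mul_le_of_approx hX hT hrank hR n) htail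
    _ ≤ (4 * √r + 1) * c * (n + 1) := by nlinarith [mul_nonneg hc (Nat.cast_nonneg (α := ℝ) n)]
    _ ≤ (4 * √r + 1) * c * (4 * Real.log (1 + k)) := by gcongr
    _ = (16 * √r + 4) * c * Real.log (1 + k) := by ring

end Chaining

section SchurMultiplier

lemma hadamard_sum {m n κ R : Type*} [NonUnitalNonAssocSemiring R] (A : Matrix m n R)
    (t : Finset κ) (B : κ → Matrix m n R) : A ⊙ (∑ k ∈ t, B k) = ∑ k ∈ t, A ⊙ B k := by
  ext i j
  simp only [hadamard_apply, Matrix.sum_apply, mul_sum]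

variable {d : ℕ} (M : Matrix (Fin d) (Fin d) ℂ)

open scoped ComplexOrder MatrixOrder in
lemma exists_eq_sum_singularValues_smul_vecMulVec :
    ∃ u v : Fin d → Fin d → ℂ, (∀ k, ∑ i, ‖u k i‖ ^ 2 ≤ 1) ∧ (∀ k, ∑ i, ‖v k i‖ ^ 2 ≤ 1) ∧
      M = ∑ k, (singularValues M k : ℂ) • vecMulVec (u k) (v k) := by
  obtain ⟨W, V, hV, hW, hM⟩ := exists_svd M
  have hWle : Wᴴ * W ≤ 1 := by
    rw [hW]
    exact diagonal_le_one fun i => by split_ifs <;> simp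
  refine ⟨Wᵀ, Vᴴ, sum_norm_sq_col_le_one hWle, fun k => ?_, ?_⟩
  · simpa using sum_norm_sq_col_le_one (mem_unitaryGroup_iff'.1 hV).le k
  · conv_lhs => rw [hM]
    ext i j
    rw [mul_apply, Matrix.sum_apply]
    refine sum_congr rfl fun k _ => ?_
    rw [mul_diagonal, Matrix.smul_apply, vecMulVec_apply, transpose_apply, smul_eq_mul]
    ring

variable {M} {K : ℝ≥0} {f : ℝ → ℝ}

open scoped ComplexOrder MatrixOrder Matrix.Norms.Frobenius in
lemma sum_singularValues_loewnerMatrix_hadamard_le (hf : LipschitzWith K f) (μ : Fin d → ℝ)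
    {S : Finset (Fin d)} (hS : S.Nonempty) :
    ∑ i ∈ S, singularValues (loewnerMatrix f μ ⊙ M) i ≤
      (16 * √10 + 4) * (44 * K) * Real.log (1 + #S) * ∑ i, singularValues M i := by
  obtain ⟨X, hX, hXS, htrace⟩ := exists_trace_eq_sum_singularValues (loewnerMatrix f μ ⊙ M) S
  obtain ⟨u, v, hu, hv, hM⟩ := exists_eq_sum_singularValues_smul_vecMulVec M
  set s := singularValues M
  set L := loewnerMatrix f μ
  set B := (16 * √10 + 4) * (44 * K) * Real.log (1 + #S)
  have hrankOne (k : Fin d) : ‖(Xᴴ * (L ⊙ vecMulVec (u k) (v k))).trace‖ ≤ B := by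
    have hnorm := norm_loewnerMatrix_hadamard_vecMulVec_le hf μ (hu k) (hv k)
    exact norm_trace_conjTranspose_mul_le_log (c := 44 * K) hX hS.card_pos hXS
      (hnorm.trans (by linarith [K.coe_nonneg]))
      (exists_approx_loewnerMatrix_hadamard_vecMulVec_four_pow hf μ (hu k) (hv k))
  calc ∑ i ∈ S, singularValues (L ⊙ M) i
    _ = ‖(Xᴴ * (L ⊙ M)).trace‖ := by
      rw [htrace, Complex.norm_real, Real.norm_of_nonneg]
      exact sum_nonneg fun i _ => singularValues_nonneg _ i
    _ = ‖∑ k, (s k : ℂ) * (Xᴴ * (L ⊙ vecMulVec (u k) (v k))).trace‖ := by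
      conv_lhs => rw [hM, hadamard_sum]
      simp [Matrix.mul_sum, trace_sum, s]
    _ ≤ ∑ k, B * s k := by
      refine norm_sum_le_of_le _ fun k _ => ?_
      rw [norm_mul, Complex.norm_real, Real.norm_of_nonneg (singularValues_nonneg M k), mul_comm]
      exact mul_le_mul_of_nonneg_right (hrankOne k) (singularValues_nonneg M k)
    _ = B * ∑ k, s k := (mul_sum ..).symm

lemma commutator_diagonal_eq_loewnerMatrix_hadamard {ι : Type*} [Fintype ι] [DecidableEq ι]
    (f : ℝ → ℝ) (μ : ι → ℝ) (x : Matrix ι ι ℂ) :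
    diagonal (fun i => (f (μ i) : ℂ)) * x - x * diagonal (fun i => (f (μ i) : ℂ)) =
      loewnerMatrix f μ ⊙
        (diagonal (fun i => (μ i : ℂ)) * x - x * diagonal fun i => (μ i : ℂ)) := by
  ext i j
  have h : (μ j - μ i) * slope f (μ i) (μ j) = f (μ j) - f (μ i) := sub_smul_slope f (μ i) (μ j)
  have h' : ((μ j : ℂ) - μ i) * slope f (μ i) (μ j) = f (μ j) - f (μ i) := by exact_mod_cast h
  simp only [Matrix.sub_apply, diagonal_mul, mul_diagonal, hadamard_apply, loewnerMatrix, of_apply]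
  linear_combination x i j * h'

end SchurMultiplier

lemma conjTranspose_mul_commutator_mul {n : Type*} [Fintype n] [DecidableEq n]
    {U : Matrix n n ℂ} (hU : Uᴴ * U = 1) (D x : Matrix n n ℂ) :
    Uᴴ * (U * D * Uᴴ * x - x * (U * D * Uᴴ)) * U = D * (Uᴴ * x * U) - Uᴴ * x * U * D := by
  simp only [Matrix.mul_sub, Matrix.sub_mul, Matrix.mul_assoc, hU, Matrix.mul_one]
  simp only [← Matrix.mul_assoc, hU, Matrix.one_mul]

/-- Matrix form of Corollary 5.6 of the paper, a weak `L¹`-type (`M_{1,∞}`) inequality: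
there is an absolute constant `C > 0` such that for every `1`-Lipschitz `f : ℝ → ℝ`,
every Hermitian `A = U diag(μ) U*`, every `x`, and every nonempty set `S` of indices,
the singular values of `T = [f(A), x]` satisfy
`∑_{i ∈ S} σᵢ(T) ≤ C log(1 + |S|) ‖[A, x]‖₁`. -/
theorem weak_L1_commutator_estimate :
    ∃ C : ℝ, 0 < C ∧ ∀ (d : ℕ), 1 ≤ d →
      ∀ (f : ℝ → ℝ), LipschitzWith 1 f →
      ∀ (U : Matrix (Fin d) (Fin d) ℂ), U ∈ Matrix.unitaryGroup (Fin d) ℂ →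
      ∀ (μ : Fin d → ℝ) (A x : Matrix (Fin d) (Fin d) ℂ),
        A = U * Matrix.diagonal (fun i => (μ i : ℂ)) * Uᴴ →
      ∀ S : Finset (Fin d), S.Nonempty →
        ∑ i ∈ S, singularValues
            ((U * Matrix.diagonal (fun i => (f (μ i) : ℂ)) * Uᴴ) * x
              - x * (U * Matrix.diagonal (fun i => (f (μ i) : ℂ)) * Uᴴ)) i
          ≤ C * Real.log (1 + (S.card : ℝ)) * schattenNorm 1 (A * x - x * A) := by
  refine ⟨(16 * √10 + 4) * 44, by positivity, fun d _ f hf U hU μ A x hA S hS => ?_⟩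
  have hcomm := conjTranspose_mul_commutator_mul (mem_unitaryGroup_iff'.1 hU)
  have hnorm : schattenNorm 1 (A * x - x * A) = ∑ i, singularValues (A * x - x * A) i := by
    simp [schattenNorm]
  rw [hnorm, hA, ← singularValues_conjTranspose_mul_mul (mem_unitaryGroup_iff.1 hU),
    ← singularValues_conjTranspose_mul_mul (M := U * _ * _ * _ - _) (mem_unitaryGroup_iff.1 hU),
    hcomm, hcomm, commutator_diagonal_eq_loewnerMatrix_hadamard]
  simpa using sum_singularValues_loewnerMatrix_hadamard_le hf μ hS
end
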